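/- arXiv:1207.1140 — 4 statements merged into one kernel-verified Lean document; each statement's English description precedes it below -/
import Mathlib

section
/- Let q be a prime power. There exist a constant a_q > 0 depending only on q and an absolute constant C > 0 such that for every ε ∈ (0, 1/2) and all sufficiently large integers n the following holds: the random linear code C ⊆ F_q^n of dimension k̃ = ⌈a_q · ε² · n / log³(1/ε)⌉ and block length n is (1 − 1/q − ε, C/ε²)-list decodable with probability at least 0.99. -/
open scoped BigOperators

/-- Relative Hamming distance between two strings of length `n`. -/
noncomputable def relDist {n : ℕ} {A : Type*} (x y : Fin n → A) : ℝ :=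
  ({i : Fin n | x i ≠ y i}.ncard : ℝ) / (n : ℝ)

/-- A code `C ⊆ A^n` is `(ρ, L)`-list decodable if every Hamming ball of relative
radius (strictly) `ρ` contains at most `L` codewords. -/
def listDecodable {n : ℕ} {A : Type*} (C : Set (Fin n → A)) (ρ L : ℝ) : Prop :=
  ∀ y : Fin n → A, ({c | c ∈ C ∧ relDist c y < ρ}.ncard : ℝ) ≤ L

/-!
If `m` messages have codewords in a ball of relative radius `1 - 1 / q - ε` around `z`, then at an
average coordinate a fraction larger than `1 / q + ε` of these codewords carry the same symbol,
namely that of `z`. Sampling the messages can only increase the expected fraction of the most common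
symbol, so the coordinates on average give a sample of `M = O(1 / ε²)` messages an expected
plurality above `1 / q + ε`. At a uniformly random column of the generator matrix, by contrast, two
distinct messages collide with probability at most `1 / q`, and a second moment argument bounds the
expected plurality by `1 / q + ε / 2` once `M` and `m` are at least `8 / ε²`.

It remains to compare the `n` sampled columns with a uniform column, uniformly in the list of
messages. This is done by chaining over the sample size `1, 2, 4, …, M`. For samples of size one the
plurality is always one. Doubling a sample of size `s` changes its plurality by a gain of order
`1 / √s` only, by a Chernoff bound over the exchange of the two halves, so the exponential moments
of the gain summed over the columns are small enough to survive a union bound over all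
`q ^ (2 s k)` samples of `s` pairs of messages: at every level the loss is the same, and there are
`O(log (1 / ε))` levels.
-/

open Finset Real

section UniformAverages

variable {I X Z : Type*} [Fintype I] [DecidableEq I] [Fintype X] [Fintype Z]

lemma expect_expect_update {M : Type*} [AddCommMonoid M] [Module ℚ≥0 M] (i : I)
    (f : (I → X) → M) : 𝔼 u, 𝔼 x, f (Function.update u i x) = 𝔼 u, f u := by
  cases isEmpty_or_nonempty X
  · have : IsEmpty (I → X) := ⟨fun u => isEmptyElim (u i)⟩
    simp only [univ_eq_empty, expect_empty]
  let swap (z : (I → X) × X) : (I → X) × X := (Function.update z.1 i z.2, z.1 i)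
  have swap_involutive : Function.Involutive swap := fun z => by simp [swap]
  calc 𝔼 u, 𝔼 x, f (Function.update u i x) = 𝔼 z : (I → X) × X, f (swap z).1 := by
        rw [← univ_product_univ, expect_product]
    _ = 𝔼 z : (I → X) × X, f z.1 :=
        Fintype.expect_equiv swap_involutive.toPerm _ _ fun _ => rfl
    _ = 𝔼 u, f u := by
        rw [← univ_product_univ, expect_product]
        simp only [Fintype.expect_const]

lemma expect_eval {M : Type*} [AddCommMonoid M] [Module ℚ≥0 M] (i : I) (f : X → M) :
    𝔼 u : I → X, f (u i) = 𝔼 x, f x := by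
  cases isEmpty_or_nonempty X
  · have : IsEmpty (I → X) := ⟨fun u => isEmptyElim (u i)⟩
    simp only [univ_eq_empty, expect_empty]
  · rw [← expect_expect_update i]
    simp only [Function.update_self, Fintype.expect_const]

lemma expect_prod_apply {R : Type*} [Semifield R] [CharZero R] (f : I → Z → R) :
    𝔼 w : I → Z, ∏ i, f i (w i) = ∏ i, 𝔼 z, f i z := by
  simp only [Fintype.expect_eq_sum_div_card, prod_div_distrib, Fintype.prod_sum, prod_const,
    card_univ, Fintype.card_fun, Nat.cast_pow]

lemma sq_expect_le_expect_sq (f : X → ℝ) : (𝔼 x, f x) ^ 2 ≤ 𝔼 x, f x ^ 2 := by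
  cases isEmpty_or_nonempty X
  · simp
  · simpa using expect_mul_sq_le_sq_mul_sq univ f 1

lemma dens_filter_le_expect {p : X → Prop} [DecidablePred p] {f : X → ℝ}
    (hf : ∀ x, 0 ≤ f x) (hp : ∀ x, p x → 1 ≤ f x) : ((univ.filter p).dens : ℝ) ≤ 𝔼 x, f x := by
  rw [nnratCast_dens, Fintype.expect_eq_sum_div_card, ← sum_boole]
  gcongr with x
  split_ifs with h
  exacts [hp x h, hf x]

end UniformAverages

section ExponentialMoments

variable {I J V W X : Type*} [Fintype I] [DecidableEq I] [Fintype J] [DecidableEq J] [Fintype V]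
  [Fintype X]

lemma expect_exp_mul_sub_le {d : X → ℝ} (hd : ∀ x y, |d x - d y| ≤ 1) (θ : ℝ) :
    𝔼 z : X × X, exp (θ * (d z.1 - d z.2)) ≤ exp (θ ^ 2 / 2) := by
  cases isEmpty_or_nonempty X
  · simpa using (exp_pos _).le
  have swap : 𝔼 z : X × X, exp (θ * (d z.1 - d z.2)) = 𝔼 z : X × X, exp (-(θ * (d z.1 - d z.2))) :=
    Fintype.expect_equiv (Equiv.prodComm X X) _ _ fun z => by
      simp only [Equiv.prodComm_apply, Prod.fst_swap, Prod.snd_swap]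
      ring_nf
  calc 𝔼 z : X × X, exp (θ * (d z.1 - d z.2)) = 𝔼 z : X × X, cosh (θ * (d z.1 - d z.2)) := by
        simp only [cosh_eq, ← expect_div, expect_add_distrib, ← swap, add_self_div_two]
    _ ≤ exp (θ ^ 2 / 2) := expect_le univ_nonempty fun z _ => by
        refine (cosh_le_exp_half_sq _).trans (exp_le_exp.2 ?_)
        have : (d z.1 - d z.2) ^ 2 ≤ 1 := (sq_le_one_iff_abs_le_one _).2 (hd _ _)
        rw [mul_pow]
        gcongr
        exact mul_le_of_le_one_right (sq_nonneg θ) this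

lemma expect_exp_mul_sum_sub_le {d : X → ℝ} (hd : ∀ x y, |d x - d y| ≤ 1) (θ : ℝ) :
    𝔼 w : I → X × X, exp (θ * ∑ i, (d (w i).1 - d (w i).2)) ≤
      exp (Fintype.card I * (θ ^ 2 / 2)) := by
  simp only [mul_sum, exp_sum]
  rw [expect_prod_apply fun _ (z : X × X) => exp (θ * (d z.1 - d z.2)), prod_const, card_univ,
    exp_nat_mul]
  gcongr
  exact expect_exp_mul_sub_le hd θ

lemma exp_sub_one_sub_le (x : ℝ) : exp x - 1 - x ≤ x ^ 2 * exp |x| := by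
  have hlower : exp x - 1 ≤ x * exp x := by
    have := mul_le_mul_of_nonneg_right (add_one_le_exp (-x)) (exp_pos x).le
    rw [← exp_add, neg_add_cancel, exp_zero] at this
    linarith
  rcases le_total 0 x with hx | hx
  · rw [abs_of_nonneg hx]
    nlinarith [add_one_le_exp x]
  · nlinarith [one_le_exp (abs_nonneg x), add_one_le_exp x, sq_nonneg x]

lemma exp_mul_sub_one_sub_le {β : ℝ} (hβ : |β| ≤ 1) (x : ℝ) :
    exp (β * x) - 1 - β * x ≤ 2 * β ^ 2 * exp (2 * |x|) := by
  have hsq : x ^ 2 ≤ 2 * exp |x| := by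
    have := quadratic_le_exp_of_nonneg (abs_nonneg x)
    rw [sq_abs] at this
    linarith [abs_nonneg x]
  calc exp (β * x) - 1 - β * x ≤ (β * x) ^ 2 * exp |β * x| := exp_sub_one_sub_le _
    _ = β ^ 2 * (x ^ 2 * exp (|β| * |x|)) := by rw [mul_pow, abs_mul, mul_assoc]
    _ ≤ β ^ 2 * (2 * exp |x| * exp |x|) := by
        gcongr
        exact mul_le_of_le_one_left (abs_nonneg x) hβ
    _ = 2 * β ^ 2 * exp (2 * |x|) := by rw [two_mul |x|, exp_add]; ring

/-- A sample `g` of points of `V` is `τ`-typical for a family `H` of functions on `V` if no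
empirical mean of a member of `H` exceeds its Poissonised log-moment `𝔼 (exp H - 1)` by more
than `τ`. -/
def IsExpTypical (H : W → V → ℝ) (τ : ℝ) (g : J → V) : Prop :=
  ∀ w, 𝔼 j, H w (g j) ≤ 𝔼 v, exp (H w v) - 1 + τ

lemma expect_exp_sum_comp_le (h : V → ℝ) :
    𝔼 g : J → V, exp (∑ j, h (g j)) ≤ exp (Fintype.card J * (𝔼 v, exp (h v) - 1)) := by
  simp only [exp_sum]
  rw [expect_prod_apply fun _ v => exp (h v), prod_const, card_univ, exp_nat_mul]
  gcongr
  linarith [add_one_le_exp (𝔼 v, exp (h v) - 1)]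

open Classical in
lemma dens_not_isExpTypical_le [Fintype W] (H : W → V → ℝ) (τ : ℝ) :
    ((univ.filter fun g : J → V => ¬ IsExpTypical H τ g).dens : ℝ) ≤
      Fintype.card W * exp (-(Fintype.card J * τ)) := by
  let excess (w : W) (g : J → V) : ℝ :=
    ∑ j, H w (g j) - Fintype.card J * (𝔼 v, exp (H w v) - 1 + τ)
  have markov : ∀ g : J → V, ¬ IsExpTypical H τ g → 1 ≤ ∑ w, exp (excess w g) := by
    intro g hg
    obtain ⟨w, hw⟩ := not_forall.1 hg
    refine le_trans ?_ (single_le_sum (fun w _ => (exp_pos (excess w g)).le) (mem_univ w))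
    rw [one_le_exp_iff, sub_nonneg, ← Fintype.card_mul_expect]
    gcongr
    exact (not_le.1 hw).le
  have moment : ∀ w, 𝔼 g : J → V, exp (excess w g) ≤ exp (-(Fintype.card J * τ)) := by
    intro w
    calc 𝔼 g : J → V, exp (excess w g)
        = (𝔼 g : J → V, exp (∑ j, H w (g j))) *
            exp (-(Fintype.card J * (𝔼 v, exp (H w v) - 1 + τ))) := by
          simp only [excess, expect_mul, ← exp_add, sub_eq_add_neg]
      _ ≤ exp (Fintype.card J * (𝔼 v, exp (H w v) - 1)) *
            exp (-(Fintype.card J * (𝔼 v, exp (H w v) - 1 + τ))) := by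
          gcongr
          exact expect_exp_sum_comp_le (H w)
      _ = exp (-(Fintype.card J * τ)) := by rw [← exp_add]; ring_nf
  calc ((univ.filter fun g : J → V => ¬ IsExpTypical H τ g).dens : ℝ)
      ≤ 𝔼 g, ∑ w, exp (excess w g) :=
        dens_filter_le_expect (fun g => sum_nonneg fun w _ => (exp_pos _).le) markov
    _ = ∑ w, 𝔼 g, exp (excess w g) := expect_sum_comm _ _ _
    _ ≤ ∑ _w : W, exp (-(Fintype.card J * τ)) := sum_le_sum fun w _ => moment w
    _ = Fintype.card W * exp (-(Fintype.card J * τ)) := by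
        rw [sum_const, card_univ, nsmul_eq_mul]

end ExponentialMoments

section Plurality

variable {I J K X : Type*} [Fintype I] [Fintype J] [DecidableEq K]

/-- The fraction of positions at which the word `p` carries the symbol `α`. -/
noncomputable def symbolFreq (p : I → K) (α : K) : ℝ := 𝔼 i, if p i = α then 1 else 0

/-- The frequency of the most common symbol of the word `p`. -/
noncomputable def plurality (p : I → K) : ℝ := ⨆ α, symbolFreq p α

/-- The change of the plurality of `p` caused by appending `p'`. -/
noncomputable def pluralityGain (p p' : I → K) : ℝ := plurality (Sum.elim p p') - plurality p

lemma symbolFreq_comp_equiv (e : I ≃ J) (p : J → K) : symbolFreq (p ∘ e) = symbolFreq p :=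
  funext fun _ => Fintype.expect_equiv e _ _ fun _ => rfl

lemma plurality_comp_equiv (e : I ≃ J) (p : J → K) : plurality (p ∘ e) = plurality p := by
  rw [plurality, symbolFreq_comp_equiv, plurality]

lemma symbolFreq_sumElim (p p' : I → K) (α : K) :
    symbolFreq (Sum.elim p p') α = (symbolFreq p α + symbolFreq p' α) / 2 := by
  calc symbolFreq (Sum.elim p p') α = ((∑ i, if p i = α then 1 else 0) +
          ∑ i, if p' i = α then 1 else 0) / (Fintype.card I + Fintype.card I) := by
        rw [symbolFreq, Fintype.expect_eq_sum_div_card, Fintype.sum_sum_type, Fintype.card_sum,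
          Nat.cast_add]
        rfl
    _ = (symbolFreq p α + symbolFreq p' α) / 2 := by
        rw [symbolFreq, symbolFreq, Fintype.expect_eq_sum_div_card, Fintype.expect_eq_sum_div_card]
        ring

lemma symbolFreq_le_plurality [Finite K] (p : I → K) (α : K) : symbolFreq p α ≤ plurality p :=
  Finite.le_ciSup (symbolFreq p) α

lemma exists_symbolFreq_eq_plurality [Finite K] [Nonempty K] (p : I → K) :
    ∃ α, symbolFreq p α = plurality p :=
  exists_eq_ciSup_of_finite

lemma plurality_of_unique [Unique I] [Finite K] (p : I → K) : plurality p = 1 := by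
  have : Nonempty K := ⟨p default⟩
  refine le_antisymm (ciSup_le fun α => ?_) ?_
  · rw [symbolFreq, univ_unique, expect_singleton]
    split_ifs <;> norm_num
  · simpa [symbolFreq] using symbolFreq_le_plurality p (p default)

lemma exists_abs_pluralityGain_le [Finite K] [Nonempty K] (p p' : I → K) :
    ∃ α, |pluralityGain p p'| ≤ |symbolFreq p α - symbolFreq p' α| / 2 := by
  obtain ⟨α, hα⟩ := exists_symbolFreq_eq_plurality p
  obtain ⟨β, hβ⟩ := exists_symbolFreq_eq_plurality (Sum.elim p p')
  have hlower := symbolFreq_le_plurality (Sum.elim p p') α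
  have hupper := symbolFreq_le_plurality p β
  rw [symbolFreq_sumElim] at hβ hlower
  rcases le_total 0 (pluralityGain p p') with hgain | hgain
  · refine ⟨β, ?_⟩
    rw [abs_of_nonneg hgain]
    simp only [pluralityGain] at hgain ⊢
    linarith [neg_abs_le (symbolFreq p β - symbolFreq p' β)]
  · refine ⟨α, ?_⟩
    rw [abs_of_nonpos hgain]
    simp only [pluralityGain] at hgain ⊢
    linarith [le_abs_self (symbolFreq p α - symbolFreq p' α)]

lemma card_mul_symbolFreq_sub (p p' : I → K) (α : K) :
    Fintype.card I * (symbolFreq p α - symbolFreq p' α) =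
      ∑ i, ((if p i = α then 1 else 0) - if p' i = α then 1 else 0) := by
  rw [mul_sub, symbolFreq, symbolFreq, Fintype.card_mul_expect, Fintype.card_mul_expect,
    sum_sub_distrib]

lemma abs_indicator_sub_le_one (P Q : Prop) [Decidable P] [Decidable Q] :
    |((if P then 1 else 0) - if Q then 1 else 0 : ℝ)| ≤ 1 := by
  split_ifs <;> norm_num

variable [Fintype X]

lemma expect_exp_symbolFreq_sub_le [DecidableEq I] [Nonempty I] (c : X → K) (α : K) {s : ℝ}
    (hs : s ^ 2 ≤ Fintype.card I) :
    𝔼 w : I → X × X, exp (s * (symbolFreq (fun i => c (w i).1) α -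
      symbolFreq (fun i => c (w i).2) α)) ≤ 7 / 4 := by
  have hI : (0 : ℝ) < Fintype.card I := by exact_mod_cast Fintype.card_pos
  calc _ = 𝔼 w : I → X × X, exp (s / Fintype.card I *
          ∑ i, ((if c (w i).1 = α then 1 else 0) - if c (w i).2 = α then 1 else 0)) := by
        simp only [← card_mul_symbolFreq_sub, ← mul_assoc, div_mul_cancel₀ _ hI.ne']
    _ ≤ exp (Fintype.card I * ((s / Fintype.card I) ^ 2 / 2)) :=
        expect_exp_mul_sum_sub_le (d := fun x => if c x = α then 1 else 0)
          (fun _ _ => abs_indicator_sub_le_one _ _) _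
    _ ≤ exp (1 / 2) := by
        rw [exp_le_exp, show Fintype.card I * ((s / Fintype.card I : ℝ) ^ 2 / 2) =
          s ^ 2 / Fintype.card I / 2 by field_simp]
        gcongr
        exact (div_le_one hI).2 hs
    _ ≤ 7 / 4 := by
        have := exp_one_lt_d9
        have hsq : exp (1 / 2) ^ 2 = exp 1 := by rw [← exp_nat_mul]; norm_num
        nlinarith [exp_pos (1 / 2)]

lemma expect_exp_abs_pluralityGain_le [DecidableEq I] [Nonempty I] [Fintype K] [Nonempty K]
    (c : X → K) {s : ℝ} (hs : s ^ 2 ≤ Fintype.card I) :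
    𝔼 w : I → X × X, exp (2 * |s * pluralityGain (fun i => c (w i).1) fun i => c (w i).2|) ≤
      7 / 2 * Fintype.card K := by
  let Δ (α : K) (w : I → X × X) : ℝ :=
    symbolFreq (fun i => c (w i).1) α - symbolFreq (fun i => c (w i).2) α
  have pointwise : ∀ w : I → X × X,
      exp (2 * |s * pluralityGain (fun i => c (w i).1) fun i => c (w i).2|) ≤
        ∑ α, (exp (s * Δ α w) + exp (-s * Δ α w)) := by
    intro w
    obtain ⟨α, hα⟩ := exists_abs_pluralityGain_le (fun i => c (w i).1) fun i => c (w i).2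
    calc exp (2 * |s * pluralityGain (fun i => c (w i).1) fun i => c (w i).2|)
        ≤ exp |s * Δ α w| := by
          rw [exp_le_exp, abs_mul, abs_mul]
          nlinarith [abs_nonneg s]
      _ ≤ exp (s * Δ α w) + exp (-s * Δ α w) := by
          rw [neg_mul]
          exact exp_abs_le _
      _ ≤ ∑ α, (exp (s * Δ α w) + exp (-s * Δ α w)) :=
          single_le_sum (f := fun α => exp (s * Δ α w) + exp (-s * Δ α w))
            (fun α _ => by positivity) (mem_univ α)
  calc _ ≤ 𝔼 w, ∑ α, (exp (s * Δ α w) + exp (-s * Δ α w)) :=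
        expect_le_expect fun w _ => pointwise w
    _ = ∑ α, (𝔼 w, exp (s * Δ α w) + 𝔼 w, exp (-s * Δ α w)) := by
        simp only [expect_sum_comm, expect_add_distrib]
    _ ≤ ∑ _α : K, (7 / 4 + 7 / 4 : ℝ) := by
        gcongr with α
        · exact expect_exp_symbolFreq_sub_le c α hs
        · exact expect_exp_symbolFreq_sub_le c α (by rwa [neg_sq])
    _ = 7 / 2 * Fintype.card K := by
        rw [sum_const, card_univ, nsmul_eq_mul]
        ring

/-- On the scale `1 / √|I|` the gain has a bounded exponential moment, which controls the Taylor
remainder. -/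
lemma expect_exp_mul_pluralityGain_le [DecidableEq I] [Nonempty I] [Fintype K] [Nonempty K]
    (c : X → K) {θ : ℝ} (hθ : θ ^ 2 ≤ Fintype.card I) :
    𝔼 w : I → X × X, (exp (θ * pluralityGain (fun i => c (w i).1) fun i => c (w i).2) - 1 -
        θ * pluralityGain (fun i => c (w i).1) fun i => c (w i).2) ≤
      7 * Fintype.card K * θ ^ 2 / Fintype.card I := by
  have hI : (0 : ℝ) < Fintype.card I := by exact_mod_cast Fintype.card_pos
  set s := √(Fintype.card I : ℝ)
  have hs : s ^ 2 = Fintype.card I := sq_sqrt hI.le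
  have hs0 : 0 < s := sqrt_pos.2 hI
  have hβ : |θ / s| ≤ 1 := by
    rw [← sq_le_one_iff_abs_le_one, div_pow, hs]
    exact (div_le_one hI).2 hθ
  calc _ ≤ 𝔼 w : I → X × X, 2 * (θ / s) ^ 2 *
          exp (2 * |s * pluralityGain (fun i => c (w i).1) fun i => c (w i).2|) := by
        refine expect_le_expect fun w _ => ?_
        have := exp_mul_sub_one_sub_le hβ
          (s * pluralityGain (fun i => c (w i).1) fun i => c (w i).2)
        rwa [← mul_assoc, div_mul_cancel₀ _ hs0.ne'] at this
    _ ≤ 2 * (θ / s) ^ 2 * (7 / 2 * Fintype.card K) := by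
        rw [← mul_expect]
        gcongr
        exact expect_exp_abs_pluralityGain_le c hs.le
    _ = 7 * Fintype.card K * θ ^ 2 / Fintype.card I := by
        rw [div_pow, hs]
        ring

end Plurality

section SampledPlurality

variable {I J K X : Type*} [Fintype I] [DecidableEq I] [Fintype J] [DecidableEq J] [DecidableEq K]
  [Fintype X]

/-- The expected plurality of a word indexed by `I` whose positions are read off from `c` at
independent uniform points. -/
noncomputable def sampledPlurality (I : Type*) [Fintype I] [DecidableEq I] (c : X → K) : ℝ :=
  𝔼 u : I → X, plurality fun i => c (u i)

lemma sampledPlurality_congr (e : I ≃ J) (c : X → K) :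
    sampledPlurality I c = sampledPlurality J c :=
  Fintype.expect_equiv (Equiv.arrowCongr e (Equiv.refl X)) _ _ fun u =>
    (plurality_comp_equiv e.symm fun i => c (u i)).symm

lemma sampledPlurality_of_unique [Unique I] [Finite K] [Nonempty X] (c : X → K) :
    sampledPlurality I c = 1 := by
  simp only [sampledPlurality, plurality_of_unique, Fintype.expect_const]

lemma symbolFreq_le_sampledPlurality [Nonempty I] [Finite K] (c : X → K) (α : K) :
    symbolFreq c α ≤ sampledPlurality I c :=
  calc symbolFreq c α = 𝔼 _i : I, symbolFreq c α := (Fintype.expect_const _).symm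
    _ = 𝔼 i, 𝔼 u : I → X, (if c (u i) = α then 1 else 0) := by
        simp only [expect_eval _ fun x => if c x = α then (1 : ℝ) else 0, symbolFreq]
    _ = 𝔼 u : I → X, symbolFreq (fun i => c (u i)) α := expect_comm ..
    _ ≤ sampledPlurality I c := expect_le_expect fun _ _ => symbolFreq_le_plurality _ α

lemma expect_pluralityGain [Nonempty X] (c : X → K) :
    𝔼 w : I → X × X, pluralityGain (fun i => c (w i).1) (fun i => c (w i).2) =
      sampledPlurality (I ⊕ I) c - sampledPlurality I c := by
  let pairs : (I → X × X) ≃ (I → X) × (I → X) :=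
    Equiv.arrowProdEquivProdArrow I (fun _ => X) fun _ => X
  simp only [pluralityGain, expect_sub_distrib]
  congr 1
  · refine Fintype.expect_equiv (pairs.trans (Equiv.sumArrowEquivProdArrow I I X).symm) _ _
      fun w => congrArg plurality ?_
    ext i
    rcases i with i | i <;> rfl
  · calc 𝔼 w : I → X × X, plurality (fun i => c (w i).1)
        = 𝔼 z : (I → X) × (I → X), plurality (fun i => c (z.1 i)) :=
          Fintype.expect_equiv pairs _ _ fun _ => rfl
      _ = sampledPlurality I c := by
        rw [← univ_product_univ, expect_product]
        simp only [Fintype.expect_const, sampledPlurality]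

end SampledPlurality

section Chaining

variable {I J K V X Y : Type*} [Fintype I] [DecidableEq K]

/-- The scaled gain `θ * pluralityGain`, at the point `v`, of a sample `w` of `I` pairs of members
of the family `c`. -/
noncomputable def scaledGain (c : Y → V → K) (θ : ℝ) (w : I → Y × Y) (v : V) : ℝ :=
  θ * pluralityGain (fun i => c (w i).1 v) fun i => c (w i).2 v

lemma expect_scaledGain [DecidableEq I] [Fintype X] [Nonempty X] (c : X → V → K) (θ : ℝ) (v : V) :
    𝔼 w : I → X × X, scaledGain c θ w v =
      θ * (sampledPlurality (I ⊕ I) (fun x => c x v) - sampledPlurality I fun x => c x v) := by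
  simp only [scaledGain, ← mul_expect, expect_pluralityGain fun x => c x v]

lemma expect_exp_scaledGain_le [DecidableEq I] [Nonempty I] [Fintype K] [Fintype X] [Nonempty X]
    (c : X → V → K) {θ : ℝ} (hθ : θ ^ 2 ≤ Fintype.card I) (v : V) :
    𝔼 w : I → X × X, (exp (scaledGain c θ w v) - 1) ≤
      θ * (sampledPlurality (I ⊕ I) (fun x => c x v) - sampledPlurality I fun x => c x v) +
        7 * Fintype.card K * θ ^ 2 / Fintype.card I := by
  have : Nonempty K := (‹Nonempty X›).map fun x => c x v
  have := expect_exp_mul_pluralityGain_le (fun x => c x v) hθ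
  rw [expect_sub_distrib] at this
  rw [← expect_scaledGain]
  simp only [scaledGain]
  linarith

variable [Fintype J] [Fintype V]

/-- By how much the mean over the sample `g` of the sampled plurality of the family `c` exceeds
its mean over all points of `V`. -/
noncomputable def pluralityExcess (I : Type*) [Fintype I] [DecidableEq I] [Fintype X]
    (c : X → V → K) (g : J → V) : ℝ :=
  𝔼 j, sampledPlurality I (fun x => c x (g j)) - 𝔼 v, sampledPlurality I fun x => c x v

lemma pluralityExcess_congr {I' : Type*} [DecidableEq I] [Fintype I'] [DecidableEq I'] [Fintype X]
    (e : I ≃ I') (c : X → V → K) (g : J → V) :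
    pluralityExcess I c g = pluralityExcess I' c g := by
  simp only [pluralityExcess, sampledPlurality_congr e]

lemma pluralityExcess_of_unique [Unique I] [DecidableEq I] [Finite K] [Nonempty J] [Nonempty V]
    [Fintype X] [Nonempty X] (c : X → V → K) (g : J → V) : pluralityExcess I c g = 0 := by
  simp only [pluralityExcess, sampledPlurality_of_unique, Fintype.expect_const, sub_self]

lemma pluralityExcess_sum_le [DecidableEq I] [Nonempty I] [Fintype K] [Nonempty V] [Fintype X]
    [Nonempty X] {c : X → V → K} {g : J → V} {θ τ : ℝ} (hθ0 : 0 < θ) (hθ : θ ^ 2 ≤ Fintype.card I)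
    (hg : IsExpTypical (scaledGain (I := I) c θ) τ g) :
    pluralityExcess (I ⊕ I) c g ≤
      pluralityExcess I c g + 7 * Fintype.card K * θ / Fintype.card I + τ / θ := by
  let jump (v : V) : ℝ :=
    sampledPlurality (I ⊕ I) (fun x => c x v) - sampledPlurality I fun x => c x v
  have averaged : θ * 𝔼 j, jump (g j) ≤
      θ * 𝔼 v, jump v + 7 * Fintype.card K * θ ^ 2 / Fintype.card I + τ :=
    calc θ * 𝔼 j, jump (g j) = 𝔼 w : I → X × X, 𝔼 j, scaledGain c θ w (g j) := by
          rw [expect_comm]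
          simp only [expect_scaledGain, ← mul_expect, jump]
      _ ≤ 𝔼 w : I → X × X, (𝔼 v, exp (scaledGain c θ w v) - 1 + τ) :=
          expect_le_expect fun w _ => hg w
      _ = 𝔼 v, 𝔼 w : I → X × X, (exp (scaledGain c θ w v) - 1) + τ := by
          simp only [expect_add_distrib, expect_sub_distrib, Fintype.expect_const]
          rw [expect_comm]
      _ ≤ 𝔼 v, (θ * jump v + 7 * Fintype.card K * θ ^ 2 / Fintype.card I) + τ := by
          gcongr with v
          exact expect_exp_scaledGain_le c hθ v
      _ = θ * 𝔼 v, jump v + 7 * Fintype.card K * θ ^ 2 / Fintype.card I + τ := by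
          rw [expect_add_distrib, Fintype.expect_const, mul_expect]
  have excess_sub : pluralityExcess (I ⊕ I) c g - pluralityExcess I c g =
      𝔼 j, jump (g j) - 𝔼 v, jump v := by
    simp only [pluralityExcess, jump, expect_sub_distrib]
    ring
  refine le_of_mul_le_mul_left ?_ hθ0
  calc θ * pluralityExcess (I ⊕ I) c g
      = θ * pluralityExcess I c g + (θ * 𝔼 j, jump (g j) - θ * 𝔼 v, jump v) := by
        rw [← mul_sub, ← excess_sub]
        ring
    _ ≤ θ * pluralityExcess I c g + (7 * Fintype.card K * θ ^ 2 / Fintype.card I + τ) := by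
        linarith
    _ = θ * (pluralityExcess I c g + 7 * Fintype.card K * θ / Fintype.card I + τ / θ) := by
        field_simp
        ring

/-- The sample `g` controls the first `T` doublings of the plurality sample size, starting from
one. On level `s` the scale `γ * 2 ^ s` makes the cost of a doubling independent of `s`, and the
tolerance `3 * 2 ^ s * δ` lets a union bound over the `|Y| ^ 2 ^ (s + 1)` samples of pairs succeed
once `δ ≥ log |Y| / |J|`. -/
def IsChainTypical (c : Y → V → K) (γ δ : ℝ) (T : ℕ) (g : J → V) : Prop :=
  ∀ s < T, IsExpTypical (scaledGain (I := Fin (2 ^ s)) c (γ * 2 ^ s)) (3 * 2 ^ s * δ) g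

lemma IsChainTypical.comp {c : Y → V → K} {γ δ : ℝ} {T : ℕ} {g : J → V}
    (hg : IsChainTypical c γ δ T g) (φ : X → Y) : IsChainTypical (c ∘ φ) γ δ T g :=
  fun s hs w => hg s hs fun i => Prod.map φ φ (w i)

lemma IsChainTypical.pluralityExcess_le [Nonempty J] [Fintype K] [Nonempty V] [Fintype X]
    [Nonempty X] {c : X → V → K} {γ δ : ℝ} {T : ℕ} {g : J → V} (hγ : 0 < γ) (hT : γ ^ 2 * 2 ^ T ≤ 1)
    (hg : IsChainTypical c γ δ T g) :
    pluralityExcess (Fin (2 ^ T)) c g ≤ T * (7 * Fintype.card K * γ + 3 * δ / γ) := by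
  induction T with
  | zero =>
    have : Unique (Fin (2 ^ 0)) := inferInstanceAs (Unique (Fin 1))
    simp [pluralityExcess_of_unique]
  | succ T ih =>
    have hT' : γ ^ 2 * 2 ^ T ≤ 1 := by
      refine le_trans ?_ hT
      gcongr <;> norm_num
    have scale : (γ * 2 ^ T) ^ 2 ≤ Fintype.card (Fin (2 ^ T)) := by
      rw [Fintype.card_fin, Nat.cast_pow, Nat.cast_ofNat]
      calc (γ * 2 ^ T) ^ 2 = γ ^ 2 * 2 ^ T * 2 ^ T := by ring
        _ ≤ 2 ^ T := mul_le_of_le_one_left (by positivity) hT'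
    let halves : Fin (2 ^ (T + 1)) ≃ Fin (2 ^ T) ⊕ Fin (2 ^ T) :=
      (finCongr (by ring)).trans finSumFinEquiv.symm
    calc pluralityExcess (Fin (2 ^ (T + 1))) c g
        = pluralityExcess (Fin (2 ^ T) ⊕ Fin (2 ^ T)) c g := pluralityExcess_congr halves c g
      _ ≤ pluralityExcess (Fin (2 ^ T)) c g +
            7 * Fintype.card K * (γ * 2 ^ T) / Fintype.card (Fin (2 ^ T)) +
            3 * 2 ^ T * δ / (γ * 2 ^ T) :=
          pluralityExcess_sum_le (by positivity) scale (hg T T.lt_succ_self)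
      _ = pluralityExcess (Fin (2 ^ T)) c g + (7 * Fintype.card K * γ + 3 * δ / γ) := by
          rw [Fintype.card_fin, Nat.cast_pow, Nat.cast_ofNat]
          field_simp
          ring
      _ ≤ T * (7 * Fintype.card K * γ + 3 * δ / γ) + (7 * Fintype.card K * γ + 3 * δ / γ) := by
          gcongr
          exact ih hT' fun s hs => hg s (hs.trans T.lt_succ_self)
      _ = (T + 1 : ℕ) * (7 * Fintype.card K * γ + 3 * δ / γ) := by
          push_cast
          ring

variable [DecidableEq J] [Nonempty J] [Fintype Y] [Nonempty Y]

open Classical in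
lemma dens_not_isExpTypical_scaledGain_le [Nonempty I] (c : Y → V → K) (θ : ℝ) :
    ((univ.filter fun g : J → V => ¬ IsExpTypical (scaledGain (I := I) c θ)
      (3 * Fintype.card I * (log (Fintype.card Y) / Fintype.card J)) g).dens : ℝ) ≤
      (Fintype.card Y : ℝ)⁻¹ := by
  have hY : (1 : ℝ) ≤ Fintype.card Y := Nat.one_le_cast.2 Fintype.card_pos
  have hI : 1 ≤ Fintype.card I := Fintype.card_pos
  refine (dens_not_isExpTypical_le _ _).trans ?_
  set Q := (Fintype.card Y : ℝ)
  set m := Fintype.card I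
  calc (Fintype.card (I → Y × Y) : ℝ) *
        exp (-(Fintype.card J * (3 * m * (log Q / Fintype.card J))))
      = Q ^ (2 * m) * (Q ^ (3 * m))⁻¹ := by
        rw [show (Fintype.card J : ℝ) * (3 * m * (log Q / Fintype.card J)) = (3 * m : ℕ) * log Q by
          push_cast; field_simp, exp_neg, exp_nat_mul, exp_log (by linarith)]
        simp [Q, m, pow_mul, sq]
    _ = (Q ^ m)⁻¹ := by
        have : Q ≠ 0 := by positivity
        rw [show 3 * m = 2 * m + m by ring, pow_add]
        field_simp
    _ ≤ Q⁻¹ := by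
        gcongr
        exact le_self_pow₀ hY (by omega)

open Classical in
lemma dens_not_isChainTypical_le (c : Y → V → K) (γ : ℝ) (T : ℕ) :
    ((univ.filter fun g : J → V =>
      ¬ IsChainTypical c γ (log (Fintype.card Y) / Fintype.card J) T g).dens : ℝ) ≤
      T / Fintype.card Y := by
  let bad (s : ℕ) : Finset (J → V) := univ.filter fun g =>
    ¬ IsExpTypical (scaledGain (I := Fin (2 ^ s)) c (γ * 2 ^ s))
      (3 * 2 ^ s * (log (Fintype.card Y) / Fintype.card J)) g
  have bad_dens : ∀ s, ((bad s).dens : ℝ) ≤ (Fintype.card Y : ℝ)⁻¹ := fun s => by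
    simpa using dens_not_isExpTypical_scaledGain_le (I := Fin (2 ^ s)) (J := J) c (γ * 2 ^ s)
  have subset : (univ.filter fun g : J → V =>
      ¬ IsChainTypical c γ (log (Fintype.card Y) / Fintype.card J) T g) ⊆
      (range T).biUnion bad := by
    intro g hg
    simpa [IsChainTypical, bad] using hg
  calc _ ≤ (((range T).biUnion bad).dens : ℝ) := by exact_mod_cast dens_le_dens subset
    _ ≤ ∑ s ∈ range T, ((bad s).dens : ℝ) := by exact_mod_cast dens_biUnion_le
    _ ≤ ∑ _s ∈ range T, (Fintype.card Y : ℝ)⁻¹ := sum_le_sum fun s _ => bad_dens s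
    _ = T / Fintype.card Y := by
        rw [sum_const, card_range, nsmul_eq_mul, div_eq_mul_inv]

end Chaining

section Collisions

variable {I K X : Type*} [Fintype I] [DecidableEq K]

/-- The probability that two independent uniform positions of the word `p` carry the same
symbol. -/
noncomputable def collisionRate (p : I → K) : ℝ := 𝔼 i, 𝔼 i', if p i = p i' then 1 else 0

variable [Fintype K]

lemma collisionRate_eq_sum_sq_symbolFreq (p : I → K) :
    collisionRate p = ∑ α, symbolFreq p α ^ 2 := by
  have indicator_eq : ∀ i i', (if p i = p i' then (1 : ℝ) else 0) =
      ∑ α, (if p i = α then 1 else 0) * if p i' = α then 1 else 0 := fun i i' => by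
    simp [eq_comm]
  simp only [collisionRate, indicator_eq, expect_sum_comm, ← mul_expect, ← expect_mul, sq,
    symbolFreq]

lemma sum_symbolFreq [Nonempty I] (p : I → K) : ∑ α, symbolFreq p α = 1 := by
  simp [symbolFreq, ← expect_sum_comm]

lemma sq_plurality_sub_le [Nonempty I] (p : I → K) :
    (plurality p - 1 / Fintype.card K) ^ 2 ≤ collisionRate p - 1 / Fintype.card K := by
  have : Nonempty K := ‹Nonempty I›.map p
  obtain ⟨α, hα⟩ := exists_symbolFreq_eq_plurality p
  rw [← hα]
  calc (symbolFreq p α - 1 / Fintype.card K) ^ 2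
      ≤ ∑ β, (symbolFreq p β - 1 / Fintype.card K) ^ 2 :=
        single_le_sum (f := fun β => (symbolFreq p β - 1 / Fintype.card K) ^ 2)
          (fun β _ => sq_nonneg _) (mem_univ α)
    _ = ∑ β, symbolFreq p β ^ 2 - 2 * (∑ β, symbolFreq p β) / Fintype.card K +
          Fintype.card K * (1 / Fintype.card K) ^ 2 := by
        simp only [sub_sq, sum_add_distrib, sum_sub_distrib, sum_const, card_univ, nsmul_eq_mul,
          ← sum_mul, ← mul_sum]
        ring
    _ = collisionRate p - 1 / Fintype.card K := by
        rw [← collisionRate_eq_sum_sq_symbolFreq, sum_symbolFreq]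
        field_simp
        ring

variable [DecidableEq I] [Fintype X] [DecidableEq X]

lemma expect_ite_apply_eq_le [Nonempty X] (i i' : I) :
    𝔼 u : I → X, (if u i = u i' then 1 else 0 : ℝ) ≤
      (if i = i' then 1 else 0) + 1 / Fintype.card X := by
  by_cases hi : i = i'
  · simp [hi]
  · rw [← expect_expect_update i]
    simp [Function.update_of_ne (Ne.symm hi), hi]

lemma expect_collisionRate_le [Nonempty I] [Nonempty X] :
    𝔼 u : I → X, collisionRate u ≤ 1 / Fintype.card I + 1 / Fintype.card X :=
  calc 𝔼 u : I → X, collisionRate u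
      = 𝔼 i : I, 𝔼 i' : I, 𝔼 u : I → X, if u i = u i' then 1 else 0 := by
        simp only [collisionRate]
        rw [expect_comm]
        exact expect_congr rfl fun i _ => expect_comm ..
    _ ≤ 𝔼 i : I, 𝔼 i' : I, ((if i = i' then 1 else 0) + 1 / Fintype.card X : ℝ) := by
        gcongr
        exact expect_ite_apply_eq_le _ _
    _ = 1 / Fintype.card I + 1 / Fintype.card X := by
        simp [expect_add_distrib]

end Collisions

section UniversalHashing

variable {I K V X Y : Type*} [DecidableEq K] [Fintype K] [Fintype V]

/-- Universality, in the sense of Carter and Wegman, of the family of hash functions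
`fun y => c y v` with seed `v`: distinct keys collide with probability at most `1 / |K|`. -/
def IsUniversalHash (c : Y → V → K) : Prop :=
  ∀ ⦃y y'⦄, y ≠ y' → 𝔼 v, (if c y v = c y' v then 1 else 0) ≤ (1 / Fintype.card K : ℝ)

lemma IsUniversalHash.comp {c : Y → V → K} (hc : IsUniversalHash c) {φ : X → Y}
    (hφ : Function.Injective φ) : IsUniversalHash (c ∘ φ) :=
  fun _ _ h => hc (hφ.ne h)

lemma IsUniversalHash.expect_collisionRate_comp_le [Fintype I] [Nonempty I] [Nonempty V]
    [DecidableEq X] {c : X → V → K} (hc : IsUniversalHash c) (u : I → X) :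
    𝔼 v, collisionRate (fun i => c (u i) v) ≤ collisionRate u + 1 / Fintype.card K := by
  have pair_le : ∀ x x', 𝔼 v, (if c x v = c x' v then 1 else 0 : ℝ) ≤
      (if x = x' then 1 else 0) + 1 / Fintype.card K := by
    intro x x'
    by_cases hx : x = x'
    · simp [hx]
    · simpa [hx] using hc hx
  calc 𝔼 v, collisionRate (fun i => c (u i) v)
      = 𝔼 i, 𝔼 i', 𝔼 v, if c (u i) v = c (u i') v then 1 else 0 := by
        simp only [collisionRate]
        rw [expect_comm]
        exact expect_congr rfl fun i _ => expect_comm ..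
    _ ≤ 𝔼 i, 𝔼 i', ((if u i = u i' then 1 else 0) + 1 / Fintype.card K : ℝ) := by
        gcongr
        exact pair_le _ _
    _ = collisionRate u + 1 / Fintype.card K := by
        simp only [expect_add_distrib, Fintype.expect_const, collisionRate]

lemma IsUniversalHash.sq_expect_sampledPlurality_sub_le [Fintype I] [DecidableEq I] [Nonempty I]
    [Nonempty V] [Fintype X] [Nonempty X] {c : X → V → K} (hc : IsUniversalHash c) :
    (𝔼 v, sampledPlurality I (fun x => c x v) - 1 / Fintype.card K) ^ 2 ≤
      1 / Fintype.card I + 1 / Fintype.card X := by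
  classical
  calc (𝔼 v, sampledPlurality I (fun x => c x v) - 1 / Fintype.card K) ^ 2
      = (𝔼 v, 𝔼 u : I → X, (plurality (fun i => c (u i) v) - 1 / Fintype.card K)) ^ 2 := by
        simp only [sampledPlurality, expect_sub_distrib, Fintype.expect_const]
    _ ≤ 𝔼 v, 𝔼 u : I → X, (plurality (fun i => c (u i) v) - 1 / Fintype.card K) ^ 2 := by
        refine (sq_expect_le_expect_sq _).trans ?_
        gcongr
        exact sq_expect_le_expect_sq _
    _ ≤ 𝔼 v, 𝔼 u : I → X, (collisionRate (fun i => c (u i) v) - 1 / Fintype.card K) := by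
        gcongr
        exact sq_plurality_sub_le _
    _ = 𝔼 u : I → X, (𝔼 v, collisionRate (fun i => c (u i) v) - 1 / Fintype.card K) := by
        rw [expect_comm]
        simp only [expect_sub_distrib, Fintype.expect_const]
    _ ≤ 𝔼 u : I → X, collisionRate u := by
        gcongr with u
        linarith [hc.expect_collisionRate_comp_le u]
    _ ≤ 1 / Fintype.card I + 1 / Fintype.card X := expect_collisionRate_le

lemma isUniversalHash_dotProduct [Fintype I] [DecidableEq I] {F : Type*} [Field F] [Fintype F]
    [DecidableEq F] : IsUniversalHash fun x v : I → F => x ⬝ᵥ v := by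
  intro x x' hx
  obtain ⟨i, hi⟩ := Function.ne_iff.1 hx
  let root (v : I → F) : F := (x' - x) ⬝ᵥ Function.update v i 0 / (x i - x' i)
  have collision_iff : ∀ (v : I → F) (a : F), x ⬝ᵥ Function.update v i a =
      x' ⬝ᵥ Function.update v i a ↔ root v = a := by
    intro v a
    have split : Function.update v i a = Function.update v i 0 + Pi.single i a := by
      ext j
      rcases eq_or_ne j i with rfl | hj <;> simp [*]
    rw [split, dotProduct_add, dotProduct_add, dotProduct_single, dotProduct_single,
      div_eq_iff (sub_ne_zero.2 hi), sub_dotProduct]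
    constructor <;> intro h <;> linear_combination -h
  calc 𝔼 v : I → F, (if x ⬝ᵥ v = x' ⬝ᵥ v then 1 else 0 : ℝ)
      = 𝔼 v : I → F, 𝔼 a, if root v = a then 1 else 0 := by
        rw [← expect_expect_update i]
        simp only [collision_iff]
    _ ≤ 1 / Fintype.card F := by
        simp

end UniversalHashing

section ListDecoding

variable {I K V X Y : Type*} [Fintype I] [DecidableEq I] [DecidableEq K] {n : ℕ} [NeZero n]

lemma relDist_eq_one_sub_expect (x z : Fin n → K) :
    relDist x z = 1 - 𝔼 j, if x j = z j then 1 else 0 := by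
  calc relDist x z = 𝔼 j, if x j ≠ z j then 1 else 0 := by
        rw [relDist, Set.ncard_eq_toFinset_card', Set.toFinset_ofPred,
          Fintype.expect_eq_sum_div_card, sum_boole, Fintype.card_fin]
    _ = 𝔼 j, (1 - if x j = z j then 1 else 0) :=
        expect_congr rfl fun j _ => by split_ifs <;> simp_all
    _ = 1 - 𝔼 j, if x j = z j then 1 else 0 := by
        rw [expect_sub_distrib, Fintype.expect_const]

lemma lt_expect_sampledPlurality [Nonempty I] [Finite K] [Fintype X] [Nonempty X] {c : X → V → K}
    {g : Fin n → V} {z : Fin n → K} {ρ : ℝ} (hz : ∀ x, relDist (fun j => c x (g j)) z < 1 - ρ) :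
    ρ < 𝔼 j, sampledPlurality I fun x => c x (g j) := by
  have agreement : ∀ x, ρ < 𝔼 j, if c x (g j) = z j then 1 else 0 := fun x => by
    have := hz x
    rw [relDist_eq_one_sub_expect] at this
    linarith
  calc ρ < 𝔼 x, 𝔼 j, (if c x (g j) = z j then 1 else 0) :=
        lt_expect (fun x _ => (agreement x).le) ⟨Classical.arbitrary X, mem_univ _, agreement _⟩
    _ = 𝔼 j, symbolFreq (fun x => c x (g j)) (z j) := expect_comm ..
    _ ≤ 𝔼 j, sampledPlurality I fun x => c x (g j) :=
        expect_le_expect fun j _ => symbolFreq_le_sampledPlurality _ _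

variable [Fintype K] [Fintype V] [Nonempty V]

lemma IsUniversalHash.card_lt_of_relDist_lt [Nonempty I] [Fintype X] [Nonempty X] {c : X → V → K}
    (hc : IsUniversalHash c) {g : Fin n → V} {z : Fin n → K} {ε : ℝ} (hε : 0 < ε)
    (hI : 8 / ε ^ 2 ≤ Fintype.card I) (hg : pluralityExcess I c g ≤ ε / 2)
    (hz : ∀ x, relDist (fun j => c x (g j)) z < 1 - 1 / Fintype.card K - ε) :
    Fintype.card X < 8 / ε ^ 2 := by
  have hX : (0 : ℝ) < Fintype.card X := Nat.cast_pos.2 Fintype.card_pos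
  have lower : 1 / Fintype.card K + ε < 𝔼 j, sampledPlurality I fun x => c x (g j) :=
    lt_expect_sampledPlurality (z := z) fun x => by linarith [hz x]
  have gap : ε / 2 < 𝔼 v, sampledPlurality I (fun x => c x v) - 1 / Fintype.card K := by
    rw [pluralityExcess] at hg
    linarith
  have hI' : 1 / (Fintype.card I : ℝ) ≤ ε ^ 2 / 8 := by
    rwa [one_div_le (Nat.cast_pos.2 Fintype.card_pos) (by positivity), one_div_div]
  have hX' : ε ^ 2 / 8 < 1 / (Fintype.card X : ℝ) := by
    have := (pow_lt_pow_left₀ gap (by positivity) two_ne_zero).trans_le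
      (hc.sq_expect_sampledPlurality_sub_le (I := I))
    linarith
  rwa [lt_one_div (by positivity) hX, one_div_div] at hX'

lemma IsChainTypical.listDecodable_range [Finite Y] {c : Y → V → K} (hc : IsUniversalHash c)
    {γ δ ε : ℝ} {T : ℕ} {g : Fin n → V} (hg : IsChainTypical c γ δ T g) (hε : 0 < ε) (hγ : 0 < γ)
    (hγT : γ ^ 2 * 2 ^ T ≤ 1) (hεT : 8 / ε ^ 2 ≤ 2 ^ T)
    (hexcess : T * (7 * Fintype.card K * γ + 3 * δ / γ) ≤ ε / 2) :
    listDecodable (Set.range fun y j => c y (g j)) (1 - 1 / Fintype.card K - ε) (8 / ε ^ 2) := by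
  classical
  have := Fintype.ofFinite Y
  intro z
  let near : Finset Y :=
    univ.filter fun y => relDist (fun j => c y (g j)) z < 1 - 1 / Fintype.card K - ε
  have card_near : (near.card : ℝ) ≤ 8 / ε ^ 2 := by
    rcases near.eq_empty_or_nonempty with hempty | hne
    · rw [hempty, card_empty, Nat.cast_zero]
      positivity
    have : Nonempty near := hne.to_subtype
    rw [← Fintype.card_coe]
    refine ((hc.comp (φ := ((↑) : near → Y)) Subtype.val_injective).card_lt_of_relDist_lt
      (I := Fin (2 ^ T)) hε (by simpa using hεT)
      (((hg.comp _).pluralityExcess_le hγ hγT).trans hexcess)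
      fun x => (mem_filter.1 x.2).2).le
  have subset : {w | w ∈ Set.range (fun y j => c y (g j)) ∧
      relDist w z < 1 - 1 / Fintype.card K - ε} ⊆ near.image fun y j => c y (g j) := by
    rintro _ ⟨⟨y, rfl⟩, hy⟩
    exact mem_coe.2 (mem_image_of_mem _ (mem_filter.2 ⟨mem_univ y, hy⟩))
  refine le_trans (Nat.cast_le.2 ?_) card_near
  calc _ ≤ ((near.image fun y j => c y (g j) : Finset (Fin n → K)) : Set (Fin n → K)).ncard :=
        Set.ncard_le_ncard subset
    _ ≤ near.card := by
        rw [Set.ncard_coe_finset]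
        exact card_image_le

open Classical in
lemma IsUniversalHash.dens_not_listDecodable_le [Fintype Y] [Nonempty Y] {c : Y → V → K}
    (hc : IsUniversalHash c) {γ ε : ℝ} {T : ℕ} (hε : 0 < ε) (hγ : 0 < γ)
    (hγT : γ ^ 2 * 2 ^ T ≤ 1) (hεT : 8 / ε ^ 2 ≤ 2 ^ T)
    (hexcess : T * (7 * Fintype.card K * γ + 3 * (log (Fintype.card Y) / n) / γ) ≤ ε / 2) :
    ((univ.filter fun g : Fin n → V => ¬ listDecodable (Set.range fun y j => c y (g j))
      (1 - 1 / Fintype.card K - ε) (8 / ε ^ 2)).dens : ℝ) ≤ T / Fintype.card Y := by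
  refine le_trans ?_ (dens_not_isChainTypical_le (J := Fin n) c γ T)
  rw [Fintype.card_fin]
  refine NNRat.cast_mono (dens_le_dens (monotone_filter_right _ fun g _ => mt fun hg => ?_))
  exact hg.listDecodable_range hc hε hγ hγT hεT hexcess

end ListDecoding

section Parameters

lemma exists_two_pow_near {ε : ℝ} (hε : 0 < ε) (hε' : ε < 1 / 2) :
    ∃ T : ℕ, 8 / ε ^ 2 ≤ 2 ^ T ∧ 2 ^ T ≤ 16 / ε ^ 2 ∧ T ≤ 9 * log (1 / ε) := by
  have hsq : 1 ≤ 8 / ε ^ 2 := by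
    rw [one_le_div (by positivity)]
    nlinarith
  obtain ⟨N, hN, hN'⟩ := exists_nat_pow_near hsq one_lt_two
  have upper : (2 : ℝ) ^ (N + 1) ≤ 16 / ε ^ 2 := by
    rw [pow_succ]
    linarith [show 16 / ε ^ 2 = 2 * (8 / ε ^ 2) by ring]
  have sixth_power : (2 : ℝ) ^ (N + 1) ≤ (1 / ε) ^ 6 := by
    have : 2 ≤ 1 / ε := by
      rw [le_div_iff₀ hε]
      linarith
    calc (2 : ℝ) ^ (N + 1) ≤ 2 ^ 4 * (1 / ε) ^ 2 := upper.trans_eq (by ring)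
      _ ≤ (1 / ε) ^ 4 * (1 / ε) ^ 2 := by gcongr
      _ = (1 / ε) ^ 6 := by ring
  refine ⟨N + 1, hN'.le, upper, ?_⟩
  have hlog : (N + 1 : ℕ) * log 2 ≤ 6 * log (1 / ε) := by
    simpa only [log_pow, Nat.cast_ofNat] using log_le_log (by positivity) sixth_power
  have hlog_two : (N + 1 : ℕ) * (2 / 3) ≤ (N + 1 : ℕ) * log 2 := by
    gcongr
    linarith [log_two_gt_d9]
  linarith

lemma exists_forall_ceil_mul_le {r : ℝ} (hr : 0 < r) (B : ℝ) :
    ∃ n₀ : ℕ, ∀ n : ℕ, n₀ ≤ n → 0 < n ∧ B ≤ ⌈r * n⌉₊ ∧ ⌈r * n⌉₊ ≤ 2 * (r * n) := by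
  refine ⟨⌈max B 1 / r⌉₊, fun n hn => ?_⟩
  have hmax : max B 1 ≤ r * n := by
    rw [← div_le_iff₀' hr]
    exact Nat.ceil_le.1 hn
  have hone : 1 ≤ r * n := (le_max_right B 1).trans hmax
  refine ⟨?_, ((le_max_left B 1).trans hmax).trans (Nat.le_ceil _), ?_⟩
  · exact_mod_cast pos_of_mul_pos_right (zero_lt_one.trans_le hone) hr.le
  · linarith [Nat.ceil_lt_add_one (zero_le_one.trans hone)]

lemma chaining_error_le {q ε l κ t : ℝ} (hq : 0 < q) (hε : 0 < ε) (hl : 0.69 ≤ l)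
    (ht : t ≤ 9 * l) (hκ : 0 ≤ κ) (hκ' : κ ≤ 2 * (1 / (100000 * q ^ 2) * ε ^ 2 / l ^ 3) * q) :
    t * (7 * q * (ε / (252 * q * l)) + 3 * κ / (ε / (252 * q * l))) ≤ ε / 2 := by
  have hl0 : 0 < l := by linarith
  calc t * (7 * q * (ε / (252 * q * l)) + 3 * κ / (ε / (252 * q * l)))
      ≤ 9 * l * (7 * q * (ε / (252 * q * l)) +
          3 * (2 * (1 / (100000 * q ^ 2) * ε ^ 2 / l ^ 3) * q) / (ε / (252 * q * l))) := by gcongr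
    _ = ε / 4 + ε * (0.13608 / l) := by
        field_simp
        ring
    _ ≤ ε / 4 + ε * (1 / 4) := by
        have : 0.13608 / l ≤ 1 / 4 := by
          rw [div_le_iff₀ hl0]
          linarith
        gcongr
    _ = ε / 2 := by ring

/-- The scale `γ` balances the two terms of the chaining error at a rate of order
`ε ^ 2 / log (1 / ε) ^ 3`, the depth `T` being of order `log (1 / ε)`. -/
lemma exists_chaining_parameters {q ε : ℝ} (hq : 2 ≤ q) (hε : 0 < ε) (hε' : ε < 1 / 2) :
    ∃ (T : ℕ) (γ : ℝ), 0 < γ ∧ γ ^ 2 * 2 ^ T ≤ 1 ∧ 8 / ε ^ 2 ≤ 2 ^ T ∧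
      ∃ n₀ : ℕ, ∀ n : ℕ, n₀ ≤ n → ∀ k : ℕ,
        k = ⌈1 / (100000 * q ^ 2) * ε ^ 2 * n / log (1 / ε) ^ 3⌉₊ →
        0 < n ∧ 100 * T ≤ k ∧ T * (7 * q * γ + 3 * (k * log q / n) / γ) ≤ ε / 2 := by
  set l := log (1 / ε)
  have hl : 0.69 ≤ l := by
    have : log 2 ≤ l := log_le_log two_pos (by rw [le_div_iff₀ hε]; linarith)
    linarith [log_two_gt_d9]
  have : 0 < l := by linarith
  have hq0 : 0 < q := by linarith
  obtain ⟨T, hεT, hTε, hTl⟩ := exists_two_pow_near hε hε'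
  have hscale : (ε / (252 * q * l)) ^ 2 * 2 ^ T ≤ 1 :=
    calc (ε / (252 * q * l)) ^ 2 * 2 ^ T ≤ (ε / (252 * q * l)) ^ 2 * (16 / ε ^ 2) := by gcongr
      _ = (4 / (252 * q * l)) ^ 2 := by
          field_simp
          norm_num
      _ ≤ 1 := pow_le_one₀ (by positivity) (by rw [div_le_one (by positivity)]; nlinarith)
  set r := 1 / (100000 * q ^ 2) * ε ^ 2 / l ^ 3 with hr
  obtain ⟨n₀, hn₀⟩ := exists_forall_ceil_mul_le (r := r) (by positivity) (100 * T)
  refine ⟨T, ε / (252 * q * l), by positivity, hscale, hεT, n₀, fun n hn k hk => ?_⟩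
  rw [mul_div_right_comm, ← hr] at hk
  obtain ⟨hn0, hTk, hkn⟩ := hn₀ n hn
  rw [← hk] at hTk hkn
  have hlog : log q ≤ q := log_le_self hq0.le
  have hlog0 : 0 ≤ log q := log_nonneg (by linarith)
  have hrate : k * log q / n ≤ 2 * r * q := by
    rw [div_le_iff₀ (Nat.cast_pos.2 hn0)]
    calc k * log q ≤ 2 * (r * n) * q := by gcongr
      _ = 2 * r * q * n := by ring
  exact ⟨hn0, by exact_mod_cast hTk,
    chaining_error_le hq0 hε hl hTl (by positivity) hrate⟩

lemma div_pow_le_of_mul_le {q : ℝ} (hq : 2 ≤ q) {T k N : ℕ} (hN : N ≠ 0) (h : N * T ≤ k) :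
    T / q ^ k ≤ 1 / N := by
  rw [div_le_div_iff₀ (by positivity) (by positivity), one_mul]
  calc (T * N : ℝ) ≤ k := by exact_mod_cast mul_comm N T ▸ h
    _ ≤ 2 ^ k := by exact_mod_cast k.lt_two_pow_self.le
    _ ≤ q ^ k := by gcongr

end Parameters

section RandomLinearCode

open Classical in
lemma one_sub_mul_card_le_ncard {X : Type*} [Fintype X] [Nonempty X] {p : X → Prop} {b : ℝ}
    (hp : ((univ.filter fun x => ¬ p x).dens : ℝ) ≤ b) :
    (1 - b) * Fintype.card X ≤ {x | p x}.ncard := by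
  have hX : (0 : ℝ) < Fintype.card X := Nat.cast_pos.2 Fintype.card_pos
  rw [nnratCast_dens, div_le_iff₀ hX] at hp
  have hsum : ((univ.filter p).card + (univ.filter fun x => ¬ p x).card : ℝ) = Fintype.card X := by
    exact_mod_cast card_filter_add_card_filter_not ..
  rw [← Set.ncard_coe_finset] at hsum
  simp only [coe_filter, mem_univ, true_and] at hsum
  linarith

open Classical in
lemma dens_not_listDecodable_vecMul_le {F : Type*} [Field F] [Fintype F] {k n T : ℕ} [NeZero n]
    {γ ε : ℝ} (hε : 0 < ε) (hγ : 0 < γ) (hγT : γ ^ 2 * 2 ^ T ≤ 1) (hεT : 8 / ε ^ 2 ≤ 2 ^ T)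
    (hexcess : T * (7 * Fintype.card F * γ + 3 * (k * log (Fintype.card F) / n) / γ) ≤ ε / 2) :
    ((univ.filter fun G : Matrix (Fin k) (Fin n) F => ¬ listDecodable
      (Set.range fun x : Fin k → F => Matrix.vecMul x G) (1 - 1 / Fintype.card F - ε)
        (8 / ε ^ 2)).dens : ℝ) ≤ T / Fintype.card F ^ k := by
  have hcard : (Fintype.card (Fin k → F) : ℝ) = Fintype.card F ^ k := by
    rw [Fintype.card_fun, Fintype.card_fin, Nat.cast_pow]
  let ofColumns : (Fin n → Fin k → F) ≃ Matrix (Fin k) (Fin n) F := Equiv.piComm fun _ _ => F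
  have columns := (isUniversalHash_dotProduct (I := Fin k) (F := F)).dens_not_listDecodable_le
    (n := n) hε hγ hγT hεT (by rwa [hcard, log_pow])
  rw [hcard, ← dens_map_equiv ofColumns] at columns
  convert columns using 3
  ext G
  rw [mem_filter_univ, mem_map_equiv, mem_filter_univ]
  rfl

end RandomLinearCode

/-- For every prime power q (i.e. every finite field F of order q) there are
constants a_q > 0 (depending only on q) and an absolute constant C > 0 such that for every
ε ∈ (0,1/2) and all sufficiently large n, the random linear code of dimension
k̃ = ⌈a_q ε² n / log³(1/ε)⌉ and block length n over F is (1 − 1/q − ε, C/ε²)-list decodable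
with probability at least 0.99 (over a uniformly random generator matrix). -/
theorem stmt0 :
    ∃ C : ℝ, 0 < C ∧
      ∀ (F : Type) [Field F] [Fintype F],
        ∃ a : ℝ, 0 < a ∧
          ∀ ε : ℝ, 0 < ε → ε < 1 / 2 →
            ∃ n₀ : ℕ, ∀ n : ℕ, n₀ ≤ n →
              ∀ kt : ℕ, kt = ⌈a * ε ^ 2 * (n : ℝ) / (Real.log (1 / ε)) ^ 3⌉₊ →
                ({G : Matrix (Fin kt) (Fin n) F |
                    listDecodable (Set.range fun x : Fin kt → F => Matrix.vecMul x G)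
                      (1 - 1 / (Fintype.card F : ℝ) - ε) (C / ε ^ 2)}.ncard : ℝ) ≥
                  0.99 * (Fintype.card (Matrix (Fin kt) (Fin n) F) : ℝ) := by
  classical
  refine ⟨8, by norm_num, fun F _ _ => ?_⟩
  have hq : (2 : ℝ) ≤ Fintype.card F := by exact_mod_cast Fintype.one_lt_card (α := F)
  refine ⟨1 / (100000 * (Fintype.card F : ℝ) ^ 2), by positivity, fun ε hε hε' => ?_⟩
  obtain ⟨T, γ, hγ, hγT, hεT, n₀, hn₀⟩ := exists_chaining_parameters hq hε hε'
  refine ⟨n₀, fun n hn kt hkt => ?_⟩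
  obtain ⟨hn0, hTk, hexcess⟩ := hn₀ n hn kt hkt
  have : NeZero n := ⟨hn0.ne'⟩
  have hbad := (dens_not_listDecodable_vecMul_le hε hγ hγT hεT hexcess).trans
    (div_pow_le_of_mul_le hq (N := 100) (by norm_num) hTk)
  refine le_of_eq_of_le ?_ (one_sub_mul_card_le_ncard hbad)
  norm_num
end

section
/- Let q be a prime power and let ε, γ ∈ (0, 1/2). There exist absolute constants c, C > 0 such that for all sufficiently large integers n there is an integer k̃ with k̃/n ≥ c · ε² / (log(1/γ) · log³(q/ε) · log q) for which the random linear code of dimension k̃ and block length n over F_q is ((1−1/q)(1−ε), C/ε²)-list decodable with probability at least 1−γ. -/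
open scoped BigOperators

/-!
A random linear code is the Hadamard code `x ↦ (⟨x, g⟩)_g` punctured at `n` random coordinates.
Distinct Hadamard codewords agree on a `1 / q` fraction of the coordinates, so by a second moment
bound any `L` of them take some value at least `L (1 / q + t)` times on at most an `O(1 / (L t²))`
fraction of the coordinates. List decodability asks that the coordinates surviving the puncturing
inherit this for every set of `L` codewords, but a union bound over all such sets would be too
expensive. Instead, a random sample of `s ≈ log (q L) / t²` of the `L` codewords already tells which
coordinates are heavy, so it is enough that the punctured code is representative for every sample:
there are only `|M| ^ s` of those, and the Chernoff bound beats this number. Summing over dyadic `t`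
and taking `L ≈ 1 / ε²` bounds the total agreement of `L` codewords with any word.
-/

section TailBounds

open Finset

variable {ι κ : Type*} [Fintype ι] [Fintype κ] [DecidableEq κ]

theorem card_le_sum_comp_le (f : ι → ℝ) (m : ℝ) :
    (#{σ : κ → ι | m ≤ ∑ l, f (σ l)} : ℝ)
      ≤ Real.exp (-m) * (∑ i, Real.exp (f i)) ^ Fintype.card κ := by
  have expand : (∑ i, Real.exp (f i)) ^ Fintype.card κ
      = ∑ σ : κ → ι, Real.exp (∑ l, f (σ l)) := by
    simp only [Real.exp_sum, ← card_univ, ← prod_const, prod_univ_sum, Fintype.piFinset_univ]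
  rw [card_filter, Nat.cast_sum, expand, mul_sum]
  refine sum_le_sum fun σ _ => ?_
  rw [← Real.exp_add]
  split_ifs with h
  · simpa using h
  · simpa using (Real.exp_pos _).le

theorem card_mul_le_sum_comp_le {a : ι → ℝ} (ha : ∀ i, |a i| ≤ 1) (ha₀ : ∑ i, a i = 0) {u : ℝ}
    (hu : 0 ≤ u) :
    (#{σ : κ → ι | Fintype.card κ * u ≤ ∑ l, a (σ l)} : ℝ)
      ≤ Real.exp (-(Fintype.card κ * u ^ 2 / 2)) * (Fintype.card ι : ℝ) ^ Fintype.card κ := by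
  have mgf : ∑ i, Real.exp (u * a i) ≤ Real.exp (u ^ 2 / 2) * Fintype.card ι :=
    calc ∑ i, Real.exp (u * a i)
        ≤ ∑ i, (Real.cosh u + a i * Real.sinh u) := sum_le_sum fun i _ => by
          simpa only [mul_comm] using Real.exp_mul_le_cosh_add_mul_sinh (ha i) u
      _ = Real.cosh u * Fintype.card ι := by
          rw [sum_add_distrib, ← sum_mul, ha₀]
          simp [mul_comm]
      _ ≤ Real.exp (u ^ 2 / 2) * Fintype.card ι := by
          gcongr
          exact Real.cosh_le_exp_half_sq u
  calc (#{σ : κ → ι | Fintype.card κ * u ≤ ∑ l, a (σ l)} : ℝ)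
      ≤ #{σ : κ → ι | u * (Fintype.card κ * u) ≤ ∑ l, u * a (σ l)} := by
        refine Nat.cast_le.2 (card_le_card (monotone_filter_right _ fun σ _ h => ?_))
        rw [← mul_sum]
        gcongr
    _ ≤ Real.exp (-(u * (Fintype.card κ * u))) * (∑ i, Real.exp (u * a i)) ^ Fintype.card κ :=
        card_le_sum_comp_le (fun i => u * a i) _
    _ ≤ Real.exp (-(u * (Fintype.card κ * u)))
          * (Real.exp (u ^ 2 / 2) * Fintype.card ι) ^ Fintype.card κ := by gcongr
    _ = Real.exp (-(Fintype.card κ * u ^ 2 / 2)) * (Fintype.card ι : ℝ) ^ Fintype.card κ := by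
        rw [mul_pow, ← Real.exp_nat_mul, ← mul_assoc, ← Real.exp_add]
        ring_nf

theorem card_le_card_comp_mem_le [DecidableEq ι] {T : Finset ι} {p : ℝ}
    (hT : #T ≤ p * Fintype.card ι) (m : ℝ) :
    (#{σ : κ → ι | m ≤ #{l | σ l ∈ T}} : ℝ)
      ≤ Real.exp (2 * p * Fintype.card κ - m) * (Fintype.card ι : ℝ) ^ Fintype.card κ := by
  have mgf : ∑ i, Real.exp (if i ∈ T then 1 else 0) ≤ Real.exp (2 * p) * Fintype.card ι :=
    calc ∑ i, Real.exp (if i ∈ T then 1 else 0)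
        ≤ ∑ i, (1 + 2 * (if i ∈ T then (1 : ℝ) else 0)) := sum_le_sum fun i _ => by
          split_ifs
          · linarith [Real.exp_one_lt_three]
          · simp
      _ = Fintype.card ι + 2 * #T := by simp [sum_add_distrib, mul_comm]
      _ ≤ (2 * p + 1) * Fintype.card ι := by linarith
      _ ≤ Real.exp (2 * p) * Fintype.card ι := by
          gcongr
          exact Real.add_one_le_exp _
  calc (#{σ : κ → ι | m ≤ #{l | σ l ∈ T}} : ℝ)
      = #{σ : κ → ι | m ≤ ∑ l, if σ l ∈ T then (1 : ℝ) else 0} := by simp only [sum_boole]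
    _ ≤ Real.exp (-m) * (∑ i, Real.exp (if i ∈ T then 1 else 0)) ^ Fintype.card κ :=
        card_le_sum_comp_le (fun i => if i ∈ T then 1 else 0) m
    _ ≤ Real.exp (-m) * (Real.exp (2 * p) * Fintype.card ι) ^ Fintype.card κ := by gcongr
    _ = Real.exp (2 * p * Fintype.card κ - m) * (Fintype.card ι : ℝ) ^ Fintype.card κ := by
        rw [mul_pow, ← Real.exp_nat_mul, ← mul_assoc, ← Real.exp_add]
        ring_nf

end TailBounds

section Averaging

open Finset

variable {α β Ω : Type*} [Fintype Ω] {η : ℝ}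

theorem sum_card_filter_le {r : Ω → α → Prop} [∀ ω x, Decidable (r ω x)] {P : Finset α}
    (hr : ∀ x ∈ P, (#{ω | r ω x} : ℝ) ≤ η * Fintype.card Ω) :
    ∑ ω, (#{x ∈ P | r ω x} : ℝ) ≤ #P * (η * Fintype.card Ω) := by
  have := sum_card_bipartiteAbove_eq_sum_card_bipartiteBelow r (s := univ) (t := P)
  simp only [bipartiteAbove, bipartiteBelow] at this
  rw [← Nat.cast_sum, this, Nat.cast_sum, ← nsmul_eq_mul]
  exact sum_le_card_nsmul _ _ _ hr

theorem exists_card_filter_le_and_card_filter_le [Nonempty Ω] {r : Ω → α → Prop}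
    {r' : Ω → β → Prop} [∀ ω x, Decidable (r ω x)] [∀ ω y, Decidable (r' ω y)] {P : Finset α}
    {Q : Finset β}
    (hP : P.Nonempty) (hQ : Q.Nonempty)
    (hr : ∀ x ∈ P, (#{ω | r ω x} : ℝ) ≤ η * Fintype.card Ω)
    (hr' : ∀ y ∈ Q, (#{ω | r' ω y} : ℝ) ≤ η * Fintype.card Ω) :
    ∃ ω, (#{x ∈ P | r ω x} : ℝ) ≤ 2 * η * #P ∧ (#{y ∈ Q | r' ω y} : ℝ) ≤ 2 * η * #Q := by
  have hP₀ : (0 : ℝ) < #P := by exact_mod_cast hP.card_pos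
  have hQ₀ : (0 : ℝ) < #Q := by exact_mod_cast hQ.card_pos
  obtain ⟨ω, -, hω⟩ : ∃ ω ∈ (univ : Finset Ω),
      (#{x ∈ P | r ω x} : ℝ) * #Q + #{y ∈ Q | r' ω y} * #P ≤ 2 * η * #P * #Q := by
    apply exists_le_of_sum_le univ_nonempty
    rw [sum_add_distrib, ← sum_mul, ← sum_mul, sum_const, card_univ, nsmul_eq_mul]
    linarith [mul_le_mul_of_nonneg_right (sum_card_filter_le hr) hQ₀.le,
      mul_le_mul_of_nonneg_right (sum_card_filter_le hr') hP₀.le]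
  refine ⟨ω, le_of_mul_le_mul_right ?_ hQ₀, le_of_mul_le_mul_right ?_ hP₀⟩
  · linarith [show (0 : ℝ) ≤ #{y ∈ Q | r' ω y} * #P by positivity]
  · linarith [show (0 : ℝ) ≤ #{x ∈ P | r ω x} * #Q by positivity]

end Averaging

section Dyadic

open Finset

theorem le_dyadic_sum {a : ℝ} (ha : a ≤ 1) (m : ℕ) :
    a ≤ (1 / 2) ^ m + ∑ i ∈ range m, if (1 / 2) ^ (i + 1) ≤ a then (1 / 2 : ℝ) ^ i else 0 := by
  induction m with
  | zero => simpa using ha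
  | succ m ih =>
    rw [sum_range_succ]
    split_ifs with h
    · linarith [show (0 : ℝ) < (1 / 2) ^ (m + 1) by positivity]
    · have : 0 ≤ ∑ i ∈ range m, if (1 / 2) ^ (i + 1) ≤ a then (1 / 2 : ℝ) ^ i else 0 :=
        sum_nonneg fun i _ => by positivity
      linarith

theorem sum_le_of_forall_card_le {κ : Type*} [Fintype κ] {a : κ → ℝ} (ha : ∀ j, a j ≤ 1) {K : ℝ}
    (hK : 0 ≤ K) {m : ℕ} (hcard : ∀ i < m, (#{j | (1 / 2) ^ (i + 1) ≤ a j} : ℝ) ≤ K * 4 ^ i) :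
    ∑ j, a j ≤ Fintype.card κ * (1 / 2) ^ m + K * 2 ^ m :=
  calc ∑ j, a j
      ≤ ∑ j, ((1 / 2) ^ m
          + ∑ i ∈ range m, if (1 / 2) ^ (i + 1) ≤ a j then (1 / 2 : ℝ) ^ i else 0) :=
        sum_le_sum fun j _ => le_dyadic_sum (ha j) m
    _ = Fintype.card κ * (1 / 2) ^ m
          + ∑ i ∈ range m, #{j | (1 / 2) ^ (i + 1) ≤ a j} * (1 / 2 : ℝ) ^ i := by
        rw [sum_add_distrib, sum_comm]
        simp [← sum_filter]
    _ ≤ Fintype.card κ * (1 / 2) ^ m + ∑ i ∈ range m, K * 4 ^ i * (1 / 2 : ℝ) ^ i := by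
        gcongr with i hi
        exact hcard i (mem_range.1 hi)
    _ = Fintype.card κ * (1 / 2) ^ m + K * (2 ^ m - 1) := by
        simp only [mul_assoc, ← mul_pow, ← mul_sum]
        norm_num [geom_sum_eq]
    _ ≤ Fintype.card κ * (1 / 2) ^ m + K * 2 ^ m := by
        gcongr
        linarith

end Dyadic

section Distance

open Finset

variable {ι κ V A : Type*} [Fintype V] [Fintype A] [DecidableEq A]

/-- Any two members of the family of words `W`, over an alphabet of size `q`, agree on at most a
`1 / q` fraction of the coordinates, i.e. have relative distance at least `1 - 1 / q`, the relative
distance of the Hadamard code. -/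
def HasHadamardDistance (W : ι → V → A) : Prop :=
  Pairwise fun i j => Fintype.card A * #{v | W i v = W j v} ≤ Fintype.card V

theorem HasHadamardDistance.comp {W : ι → V → A} (hW : HasHadamardDistance W)
    {X : κ → ι} (hX : X.Injective) : HasHadamardDistance (W ∘ X) :=
  hW.comp_of_injective hX

end Distance

section Frequencies

open Finset

variable {ι V A : Type*} [Fintype ι] [DecidableEq A]

/-- The empirical frequency of the symbol `a` in the word `c`. -/
noncomputable def freq (c : ι → A) (a : A) : ℝ := #{i | c i = a} / Fintype.card ι

theorem card_mul_freq (c : ι → A) (a : A) : Fintype.card ι * freq c a = #{i | c i = a} := by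
  rcases isEmpty_or_nonempty ι with h | h
  · simp
  · rw [freq, mul_div_cancel₀]
    exact Nat.cast_ne_zero.2 Fintype.card_ne_zero

theorem freq_nonneg (c : ι → A) (a : A) : 0 ≤ freq c a := by
  unfold freq; positivity

theorem freq_le_one (c : ι → A) (a : A) : freq c a ≤ 1 :=
  div_le_one_of_le₀ (Nat.cast_le.2 (card_le_univ _)) (Nat.cast_nonneg _)

variable [Fintype A]

theorem sum_freq [Nonempty ι] (c : ι → A) : ∑ a, freq c a = 1 := by
  simp only [freq, ← sum_div, ← Nat.cast_sum]
  rw [← card_eq_sum_card_fiberwise fun _ _ => mem_coe.2 (mem_univ _), card_univ, div_self]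
  exact Nat.cast_ne_zero.2 Fintype.card_ne_zero

theorem sum_freq_sub_sq [Nonempty ι] [Nonempty A] (c : ι → A) :
    ∑ a, (freq c a - 1 / Fintype.card A) ^ 2 = ∑ a, freq c a ^ 2 - 1 / Fintype.card A := by
  have hA : (Fintype.card A : ℝ) ≠ 0 := Nat.cast_ne_zero.2 Fintype.card_ne_zero
  simp only [sub_sq, sum_add_distrib, sum_sub_distrib, ← sum_mul, ← mul_sum, sum_freq, sum_const,
    card_univ, nsmul_eq_mul]
  field_simp
  ring

theorem card_sq_mul_sum_freq_sq (c : ι → A) :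
    (Fintype.card ι : ℝ) ^ 2 * ∑ a, freq c a ^ 2 = ∑ i, (#{j | c i = c j} : ℝ) := by
  simp only [mul_sum, ← mul_pow, card_mul_freq]
  rw [← sum_fiberwise univ c]
  refine sum_congr rfl fun a _ => ?_
  rw [sum_congr rfl fun i hi => by rw [(mem_filter.1 hi).2], sum_const, nsmul_eq_mul, sq]
  simp only [eq_comm]

variable [Fintype V]

theorem HasHadamardDistance.sum_card_eq_le [Nonempty A] {W : ι → V → A}
    (hW : HasHadamardDistance W) :
    ∑ v, ∑ i, (#{j | W i v = W j v} : ℝ)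
      ≤ Fintype.card ι * Fintype.card V
        + Fintype.card ι ^ 2 * (Fintype.card V / Fintype.card A) := by
  classical
  have hA : (0 : ℝ) < Fintype.card A := Nat.cast_pos.2 Fintype.card_pos
  have pair (i j : ι) : (#{v | W i v = W j v} : ℝ)
      ≤ (if i = j then (Fintype.card V : ℝ) else 0) + Fintype.card V / Fintype.card A := by
    split_ifs with h
    · simp only [h, filter_true, card_univ, le_add_iff_nonneg_right]
      positivity
    · rw [zero_add, le_div_iff₀' hA]
      exact_mod_cast hW h
  calc ∑ v, ∑ i, (#{j | W i v = W j v} : ℝ)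
      = ∑ i, ∑ j, (#{v | W i v = W j v} : ℝ) := by
        simp only [card_filter, Nat.cast_sum]
        rw [sum_comm]
        exact sum_congr rfl fun i _ => sum_comm
    _ ≤ ∑ i : ι, ∑ j : ι,
          ((if i = j then (Fintype.card V : ℝ) else 0) + Fintype.card V / Fintype.card A) :=
        sum_le_sum fun i _ => sum_le_sum fun j _ => pair i j
    _ = Fintype.card ι * Fintype.card V
          + Fintype.card ι ^ 2 * (Fintype.card V / Fintype.card A) := by
        simp only [sum_add_distrib, sum_ite_eq, mem_univ, if_true, sum_const, card_univ,
          nsmul_eq_mul]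
        ring

theorem HasHadamardDistance.sum_sum_freq_sub_sq_le [Nonempty ι] [Nonempty A] {W : ι → V → A}
    (hW : HasHadamardDistance W) :
    ∑ v, ∑ a, (freq (W · v) a - 1 / Fintype.card A) ^ 2
      ≤ (Fintype.card V : ℝ) / Fintype.card ι := by
  have hι : (0 : ℝ) < Fintype.card ι := Nat.cast_pos.2 Fintype.card_pos
  have h := hW.sum_card_eq_le
  simp only [← card_sq_mul_sum_freq_sq fun i => W i _, ← mul_sum] at h
  simp only [sum_freq_sub_sq, sum_sub_distrib, sum_const, card_univ, nsmul_eq_mul]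
  refine le_of_mul_le_mul_left ?_ (pow_pos hι 2)
  calc (Fintype.card ι : ℝ) ^ 2
        * (∑ v, ∑ a, freq (W · v) a ^ 2 - Fintype.card V * (1 / Fintype.card A))
      ≤ Fintype.card ι * Fintype.card V := by
        rw [mul_sub, mul_one_div]
        linarith
    _ = (Fintype.card ι : ℝ) ^ 2 * (Fintype.card V / Fintype.card ι) := by field_simp

/-- The coordinates at which some symbol exceeds its uniform share among the words `W` by `t`. -/
noncomputable def heavy (W : ι → V → A) (t : ℝ) : Finset V :=
  {v | ∃ a, 1 / (Fintype.card A : ℝ) + t ≤ freq (W · v) a}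

theorem mem_heavy {W : ι → V → A} {t : ℝ} {v : V} :
    v ∈ heavy W t ↔ ∃ a, 1 / (Fintype.card A : ℝ) + t ≤ freq (W · v) a := by
  simp [heavy]

theorem HasHadamardDistance.card_heavy_le [Nonempty ι] [Nonempty A] {W : ι → V → A}
    (hW : HasHadamardDistance W) {t : ℝ} (ht : 0 < t) :
    (#(heavy W t) : ℝ) ≤ 1 / (Fintype.card ι * t ^ 2) * Fintype.card V := by
  have markov : #(heavy W t) * t ^ 2 ≤ (Fintype.card V : ℝ) / Fintype.card ι :=
    calc #(heavy W t) * t ^ 2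
        ≤ ∑ v ∈ heavy W t, ∑ a, (freq (W · v) a - 1 / Fintype.card A) ^ 2 := by
          rw [← nsmul_eq_mul]
          refine card_nsmul_le_sum _ _ _ fun v hv => ?_
          obtain ⟨a, ha⟩ := mem_heavy.1 hv
          calc t ^ 2 ≤ (freq (W · v) a - 1 / Fintype.card A) ^ 2 := by
                gcongr
                linarith
            _ ≤ ∑ a, (freq (W · v) a - 1 / Fintype.card A) ^ 2 :=
                single_le_sum (f := fun a => (freq (W · v) a - 1 / Fintype.card A) ^ 2)
                  (fun _ _ => sq_nonneg _) (mem_univ a)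
      _ ≤ ∑ v, ∑ a, (freq (W · v) a - 1 / Fintype.card A) ^ 2 :=
          sum_le_univ_sum_of_nonneg fun v => sum_nonneg fun a _ => sq_nonneg _
      _ ≤ Fintype.card V / Fintype.card ι := hW.sum_sum_freq_sub_sq_le
  calc (#(heavy W t) : ℝ) ≤ Fintype.card V / Fintype.card ι / t ^ 2 :=
        (le_div_iff₀ (by positivity)).2 markov
    _ = 1 / (Fintype.card ι * t ^ 2) * Fintype.card V := by rw [div_div]; ring

end Frequencies

section Sampling

open Finset

variable {ι κ A : Type*} [Fintype ι] [Fintype κ] [DecidableEq A]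

theorem card_le_abs_freq_comp_sub_le [DecidableEq κ] (c : ι → A) (a : A) {δ : ℝ} (hδ : 0 ≤ δ) :
    (#{σ : κ → ι | δ ≤ |freq (c ∘ σ) a - freq c a|} : ℝ)
      ≤ 2 * Real.exp (-(Fintype.card κ * δ ^ 2 / 2)) * Fintype.card (κ → ι) := by
  classical
  let e (i : ι) : ℝ := (if c i = a then 1 else 0) - freq c a
  have abs_e_le (i : ι) : |e i| ≤ 1 := by
    have h₀ := freq_nonneg c a
    have h₁ := freq_le_one c a
    simp only [e, abs_le]
    split_ifs <;> constructor <;> linarith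
  have sum_e : ∑ i, e i = 0 := by simp [e, card_mul_freq]
  have sum_e_comp (σ : κ → ι) :
      ∑ l, e (σ l) = Fintype.card κ * (freq (c ∘ σ) a - freq c a) := by
    simp [e, mul_sub, card_mul_freq]
  have upper := card_mul_le_sum_comp_le (κ := κ) abs_e_le sum_e hδ
  have lower := card_mul_le_sum_comp_le (κ := κ) (a := fun i => -e i)
    (by simpa only [abs_neg] using abs_e_le) (by simp only [sum_neg_distrib, sum_e, neg_zero]) hδ
  have split : ({σ : κ → ι | δ ≤ |freq (c ∘ σ) a - freq c a|} : Finset _)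
      ⊆ ({σ : κ → ι | Fintype.card κ * δ ≤ ∑ l, e (σ l)} : Finset _)
        ∪ ({σ : κ → ι | Fintype.card κ * δ ≤ ∑ l, -e (σ l)} : Finset _) := by
    rw [← filter_or]
    refine monotone_filter_right _ fun σ _ h => ?_
    rw [sum_neg_distrib, sum_e_comp, ← mul_neg]
    exact (le_abs.1 h).imp (mul_le_mul_of_nonneg_left · (Nat.cast_nonneg _))
      (mul_le_mul_of_nonneg_left · (Nat.cast_nonneg _))
  have := Nat.cast_le (α := ℝ).2 ((card_le_card split).trans (card_union_le _ _))
  push_cast [Fintype.card_fun] at this ⊢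
  linarith

variable [Fintype A]

/-- The subsample `σ` of the word `c` misjudges the frequency of some symbol by at least `δ`. -/
def IsSkewed (δ : ℝ) (σ : κ → ι) (c : ι → A) : Prop :=
  ∃ a, δ ≤ |freq (c ∘ σ) a - freq c a|

noncomputable instance (δ : ℝ) (σ : κ → ι) (c : ι → A) : Decidable (IsSkewed δ σ c) :=
  Fintype.decidableExistsFintype

theorem card_isSkewed_le [DecidableEq κ] (c : ι → A) {δ : ℝ} (hδ : 0 ≤ δ) :
    (#{σ : κ → ι | IsSkewed δ σ c} : ℝ)
      ≤ Fintype.card A * (2 * Real.exp (-(Fintype.card κ * δ ^ 2 / 2)))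
        * Fintype.card (κ → ι) := by
  classical
  have union : ({σ : κ → ι | IsSkewed δ σ c} : Finset _)
      ⊆ univ.biUnion fun a => {σ : κ → ι | δ ≤ |freq (c ∘ σ) a - freq c a|} := fun σ hσ => by
    obtain ⟨a, ha⟩ := (mem_filter.1 hσ).2
    exact mem_biUnion.2 ⟨a, mem_univ a, mem_filter.2 ⟨mem_univ σ, ha⟩⟩
  calc (#{σ : κ → ι | IsSkewed δ σ c} : ℝ)
      ≤ ∑ a, (#{σ : κ → ι | δ ≤ |freq (c ∘ σ) a - freq c a|} : ℝ) := by
        exact_mod_cast (card_le_card union).trans card_biUnion_le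
    _ ≤ ∑ _a : A, 2 * Real.exp (-(Fintype.card κ * δ ^ 2 / 2)) * Fintype.card (κ → ι) :=
        sum_le_sum fun a _ => card_le_abs_freq_comp_sub_le c a hδ
    _ = _ := by simp only [sum_const, card_univ, nsmul_eq_mul, mul_assoc]

variable {V : Type*} [Fintype V] {W : ι → V → A} {σ : κ → ι} {v : V} {t t' : ℝ}

theorem mem_heavy_comp (hσ : ¬ IsSkewed (t' - t) σ (W · v)) (hv : v ∈ heavy W t') :
    v ∈ heavy (W ∘ σ) t := by
  obtain ⟨a, ha⟩ := mem_heavy.1 hv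
  simp only [IsSkewed, not_exists, not_le, abs_lt] at hσ
  refine mem_heavy.2 ⟨a, ?_⟩
  have := (hσ a).1
  change 1 / (Fintype.card A : ℝ) + t ≤ freq ((W · v) ∘ σ) a
  linarith

theorem mem_heavy_of_mem_heavy_comp (hσ : ¬ IsSkewed (t' - t) σ (W · v))
    (hv : v ∈ heavy (W ∘ σ) t') : v ∈ heavy W t := by
  obtain ⟨a, ha⟩ := mem_heavy.1 hv
  simp only [IsSkewed, not_exists, not_le, abs_lt] at hσ
  refine mem_heavy.2 ⟨a, ?_⟩
  have := (hσ a).2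
  change 1 / (Fintype.card A : ℝ) + t' ≤ freq ((W · v) ∘ σ) a at ha
  linarith

theorem card_heavy_le_card_heavy_comp_add :
    #(heavy W t') ≤ #(heavy (W ∘ σ) t) + #{v ∈ heavy W t' | IsSkewed (t' - t) σ (W · v)} := by
  classical
  refine (card_le_card fun v hv => ?_).trans (card_union_le _ _)
  by_cases hσ : IsSkewed (t' - t) σ (W · v)
  · exact mem_union_right _ (mem_filter.2 ⟨hv, hσ⟩)
  · exact mem_union_left _ (mem_heavy_comp hσ hv)

theorem card_heavy_comp_le_card_heavy_add :
    #(heavy (W ∘ σ) t') ≤ #(heavy W t) + #{v | IsSkewed (t' - t) σ (W · v)} := by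
  classical
  refine (card_le_card fun v hv => ?_).trans (card_union_le _ _)
  by_cases hσ : IsSkewed (t' - t) σ (W · v)
  · exact mem_union_right _ (mem_filter.2 ⟨mem_univ v, hσ⟩)
  · exact mem_union_left _ (mem_heavy_of_mem_heavy_comp hσ hv)

end Sampling

section SampleSize

/-- The number of samples after which the frequency of every symbol of an alphabet of size `q` is
known to within `t / 4`, except with probability `1 / (8 * L)`. -/
noncomputable def sampleSize (q L : ℕ) (t : ℝ) : ℕ := ⌈32 * Real.log (16 * q * L) / t ^ 2⌉₊

theorem mul_exp_neg_sampleSize_le {q L : ℕ} (hq : 0 < q) (hL : 0 < L) {t : ℝ} (ht : 0 < t) :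
    q * (2 * Real.exp (-(sampleSize q L t * (t / 4) ^ 2 / 2))) ≤ 1 / (8 * L : ℝ) := by
  have hq : (0 : ℝ) < q := Nat.cast_pos.2 hq
  have hL : (0 : ℝ) < L := Nat.cast_pos.2 hL
  have log_le : Real.log (16 * q * L) ≤ sampleSize q L t * (t / 4) ^ 2 / 2 := by
    have := (div_le_iff₀ (by positivity)).1 (Nat.le_ceil (32 * Real.log (16 * q * L) / t ^ 2))
    rw [sampleSize]
    linarith
  calc q * (2 * Real.exp (-(sampleSize q L t * (t / 4) ^ 2 / 2)))
      ≤ q * (2 * Real.exp (-Real.log (16 * q * L))) := by gcongr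
    _ = 1 / (8 * L : ℝ) := by
        rw [Real.exp_neg, Real.exp_log (mul_pos (mul_pos (by norm_num) hq) hL)]
        field_simp
        norm_num

theorem one_le_log_sixteen_mul {x : ℝ} (hx : 1 ≤ x) : 1 ≤ Real.log (16 * x) := by
  rw [Real.le_log_iff_exp_le (by linarith)]
  linarith [Real.exp_one_lt_three]

theorem sampleSize_le {q L : ℕ} (hq : 0 < q) (hL : 0 < L) {t : ℝ} (ht : 0 < t) (ht₁ : t ≤ 1) :
    sampleSize q L t ≤ 33 * Real.log (16 * q * L) / t ^ 2 := by
  have one_le : 1 ≤ Real.log (16 * q * L) / t ^ 2 := by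
    rw [le_div_iff₀ (by positivity), mul_assoc]
    have : (1 : ℝ) ≤ q * L := by exact_mod_cast Nat.mul_pos hq hL
    linarith [pow_le_one₀ (n := 2) ht.le ht₁, one_le_log_sixteen_mul this]
  rw [mul_div_assoc]
  have := Nat.ceil_lt_add_one (a := 32 * (Real.log (16 * q * L) / t ^ 2)) (by linarith)
  rw [sampleSize, mul_div_assoc]
  linarith

end SampleSize

section Puncturing

open Finset

variable {ι M V A J : Type*} [Fintype ι] [Fintype V] [Fintype A] [DecidableEq A]

theorem exists_sample [Nonempty ι] [Nonempty V] (W : ι → V → A) (G : J → V) {P : Finset J}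
    (hP : P.Nonempty) {s : ℕ} {δ η : ℝ} (hδ : 0 ≤ δ)
    (hη : Fintype.card A * (2 * Real.exp (-(s * δ ^ 2 / 2))) ≤ η) :
    ∃ σ : Fin s → ι, (#{j ∈ P | IsSkewed δ σ (W · (G j))} : ℝ) ≤ 2 * η * #P ∧
      (#{v | IsSkewed δ σ (W · v)} : ℝ) ≤ 2 * η * Fintype.card V := by
  have rare (c : ι → A) :
      (#{σ : Fin s → ι | IsSkewed δ σ c} : ℝ) ≤ η * Fintype.card (Fin s → ι) := by
    refine (card_isSkewed_le c hδ).trans ?_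
    rw [Fintype.card_fin]
    gcongr
  exact exists_card_filter_le_and_card_filter_le hP univ_nonempty (fun j _ => rare (W · (G j)))
    fun v _ => rare (W · v)

theorem HasHadamardDistance.card_heavy_comp_le {κ : Type*} [Fintype κ] [Nonempty ι] [Nonempty A]
    {W : ι → V → A} (hW : HasHadamardDistance W) {σ : κ → ι} {t : ℝ} (ht : 0 < t) (ht₁ : t ≤ 1)
    (hσ : (#{v | IsSkewed (t / 4) σ (W · v)} : ℝ) ≤ 1 / Fintype.card ι * Fintype.card V) :
    (#(heavy (W ∘ σ) (3 * t / 4)) : ℝ) ≤ 5 / (Fintype.card ι * t ^ 2) * Fintype.card V := by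
  have hι : (0 : ℝ) < Fintype.card ι := Nat.cast_pos.2 Fintype.card_pos
  have split : (#(heavy (W ∘ σ) (3 * t / 4)) : ℝ)
      ≤ #(heavy W (t / 2)) + #{v | IsSkewed (t / 4) σ (W · v)} := by
    rw [show t / 4 = 3 * t / 4 - t / 2 by ring]
    exact_mod_cast card_heavy_comp_le_card_heavy_add (W := W)
  calc (#(heavy (W ∘ σ) (3 * t / 4)) : ℝ)
      ≤ 1 / (Fintype.card ι * (t / 2) ^ 2) * Fintype.card V
          + 1 / Fintype.card ι * Fintype.card V :=
        split.trans (add_le_add (hW.card_heavy_le (half_pos ht)) hσ)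
    _ ≤ 1 / (Fintype.card ι * (t / 2) ^ 2) * Fintype.card V
          + 1 / (Fintype.card ι * t ^ 2) * Fintype.card V := by
        gcongr
        exact mul_le_of_le_one_right hι.le (pow_le_one₀ ht.le ht₁)
    _ = 5 / (Fintype.card ι * t ^ 2) * Fintype.card V := by
        field_simp
        ring

variable [Fintype J]

/-- The coordinates `G` represent the code `B` for samples of `s` codewords: whenever such a sample
is heavy at level `τ` on at most a fraction `p` of all the coordinates, it is heavy on at most a
fraction `4 * p` of the coordinates listed by `G`. -/
def IsRepresentative (B : M → V → A) (s : ℕ) (τ p : ℝ) (G : J → V) : Prop :=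
  ∀ S : Fin s → M, (#(heavy (B ∘ S) τ) : ℝ) ≤ p * Fintype.card V →
    (#(heavy (fun l => B (S l) ∘ G) τ) : ℝ) ≤ 4 * p * Fintype.card J

noncomputable instance (B : M → V → A) (s : ℕ) (τ p : ℝ) :
    DecidablePred (IsRepresentative B s τ p (J := J)) :=
  Classical.decPred _

theorem card_le_card_heavy_comp_le [DecidableEq J] {W : ι → V → A} {τ p : ℝ}
    (hW : (#(heavy W τ) : ℝ) ≤ p * Fintype.card V) (m : ℝ) :
    (#{G : J → V | m ≤ #(heavy (fun i => W i ∘ G) τ)} : ℝ)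
      ≤ Real.exp (2 * p * Fintype.card J - m) * Fintype.card (J → V) := by
  classical
  have heavy_comp (G : J → V) :
      heavy (fun i => W i ∘ G) τ = ({j | G j ∈ heavy W τ} : Finset J) := by
    ext j
    simp [mem_heavy]
  simpa only [heavy_comp, Fintype.card_fun, Nat.cast_pow] using card_le_card_comp_mem_le hW m

theorem card_not_isRepresentative_le [Fintype M] [DecidableEq J] (B : M → V → A) {s : ℕ} {p : ℝ}
    (hs : s * Real.log (Fintype.card M) ≤ p * Fintype.card J) (τ : ℝ) :
    (#{G : J → V | ¬ IsRepresentative B s τ p G} : ℝ)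
      ≤ Real.exp (-(p * Fintype.card J)) * Fintype.card (J → V) := by
  classical
  let fewHeavy : Finset (Fin s → M) := {S | (#(heavy (B ∘ S) τ) : ℝ) ≤ p * Fintype.card V}
  have union : ({G : J → V | ¬ IsRepresentative B s τ p G} : Finset _) ⊆ fewHeavy.biUnion fun S =>
      {G | 4 * p * Fintype.card J ≤ #(heavy (fun l => B (S l) ∘ G) τ)} := fun G hG => by
    simp only [IsRepresentative, not_forall, mem_filter, mem_univ, true_and, not_le] at hG
    obtain ⟨S, hS, hG⟩ := hG
    exact mem_biUnion.2 ⟨S, mem_filter.2 ⟨mem_univ S, hS⟩, mem_filter.2 ⟨mem_univ G, hG.le⟩⟩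
  calc (#{G : J → V | ¬ IsRepresentative B s τ p G} : ℝ)
      ≤ ∑ S ∈ fewHeavy,
          (#{G : J → V | 4 * p * Fintype.card J ≤ #(heavy (fun l => B (S l) ∘ G) τ)} : ℝ) := by
        exact_mod_cast (card_le_card union).trans card_biUnion_le
    _ ≤ #fewHeavy * (Real.exp (2 * p * Fintype.card J - 4 * p * Fintype.card J)
          * Fintype.card (J → V)) := by
        rw [← nsmul_eq_mul]
        exact sum_le_card_nsmul _ _ _ fun S hS =>
          card_le_card_heavy_comp_le (W := B ∘ S) (mem_filter.1 hS).2 _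
    _ ≤ Real.exp (p * Fintype.card J)
          * (Real.exp (2 * p * Fintype.card J - 4 * p * Fintype.card J)
            * Fintype.card (J → V)) := by
        gcongr
        calc (#fewHeavy : ℝ) ≤ Fintype.card M ^ s := by
              exact_mod_cast (card_le_univ fewHeavy).trans_eq (by simp)
          _ ≤ Real.exp (Real.log (Fintype.card M)) ^ s := by
              gcongr
              exact Real.le_exp_log _
          _ ≤ Real.exp (p * Fintype.card J) := by
              rwa [← Real.exp_nat_mul, Real.exp_le_exp]
    _ = Real.exp (-(p * Fintype.card J)) * Fintype.card (J → V) := by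
        rw [← mul_assoc, ← Real.exp_add]
        ring_nf

/-- `IsRepresentative` with the parameters used to count the coordinates where some symbol exceeds
its uniform share among `L` codewords by `t`. -/
def IsRepresentativeAt (B : M → V → A) (L : ℕ) (t : ℝ) (G : J → V) : Prop :=
  IsRepresentative B (sampleSize (Fintype.card A) L t) (3 * t / 4) (5 / (L * t ^ 2)) G

theorem IsRepresentativeAt.card_heavy_le [Nonempty ι] {B : M → V → A} (hB : HasHadamardDistance B)
    {X : ι → M} (hX : X.Injective) {t : ℝ} (ht : 0 < t) (ht₁ : t ≤ 1) {G : J → V}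
    (hG : IsRepresentativeAt B (Fintype.card ι) t G) :
    (#(heavy (fun i => B (X i) ∘ G) t) : ℝ) ≤ 40 / (Fintype.card ι * t ^ 2) * Fintype.card J := by
  have hι : (1 : ℝ) ≤ Fintype.card ι := Nat.one_le_cast.2 Fintype.card_pos
  have hη : 2 * (1 / (8 * (Fintype.card ι : ℝ))) ≤ 1 / Fintype.card ι := by
    field_simp
    norm_num
  set P := heavy (fun i => B (X i) ∘ G) t with hP
  rcases P.eq_empty_or_nonempty with h | ⟨j, hj⟩
  · rw [h, card_empty, Nat.cast_zero]
    positivity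
  obtain ⟨a, -⟩ := mem_heavy.1 hj
  have : Nonempty V := ⟨G j⟩
  have : Nonempty A := ⟨a⟩
  obtain ⟨σ, hσP, hσV⟩ := exists_sample (B ∘ X) G ⟨j, hj⟩ (by positivity)
    (mul_exp_neg_sampleSize_le (Fintype.card_pos (α := A)) (Fintype.card_pos (α := ι)) ht)
  have few_in_G : (#(heavy (fun l => B (X (σ l)) ∘ G) (3 * t / 4)) : ℝ)
      ≤ 4 * (5 / (Fintype.card ι * t ^ 2)) * Fintype.card J :=
    hG (X ∘ σ) ((hB.comp hX).card_heavy_comp_le ht ht₁ (hσV.trans (by gcongr)))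
  have few_skewed : (#{j ∈ P | IsSkewed (t / 4) σ (fun i => B (X i) (G j))} : ℝ) ≤ 1 / 2 * #P := by
    refine hσP.trans ?_
    gcongr
    field_simp
    linarith
  have split : (#P : ℝ) ≤ #(heavy (fun l => B (X (σ l)) ∘ G) (3 * t / 4))
      + #{j ∈ P | IsSkewed (t / 4) σ (fun i => B (X i) (G j))} := by
    rw [show t / 4 = t - 3 * t / 4 by ring, hP]
    exact_mod_cast card_heavy_le_card_heavy_comp_add (W := fun i => B (X i) ∘ G)
  calc (#P : ℝ) ≤ 2 * (4 * (5 / (Fintype.card ι * t ^ 2)) * Fintype.card J) := by linarith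
    _ = 40 / (Fintype.card ι * t ^ 2) * Fintype.card J := by ring

/-- The coordinates `G` represent the code `B` well enough to control the words in which `L`
codewords agree more often than chance by `1 / 2`, `1 / 4`, …, `1 / 2 ^ m`. -/
def IsMultiscaleRepresentative (B : M → V → A) (L m : ℕ) (G : J → V) : Prop :=
  ∀ i < m, IsRepresentativeAt B L ((1 / 2) ^ (i + 1)) G

theorem IsMultiscaleRepresentative.sum_freq_le [Nonempty ι] [Nonempty A] {B : M → V → A}
    (hB : HasHadamardDistance B) {m : ℕ} {G : J → V}
    (hG : IsMultiscaleRepresentative B (Fintype.card ι) m G) {X : ι → M} (hX : X.Injective)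
    (y : J → A) :
    ∑ j, freq (fun i => B (X i) (G j)) (y j)
      ≤ Fintype.card J
        * (1 / Fintype.card A + ((1 / 2) ^ m + 160 * 2 ^ m / Fintype.card ι)) := by
  have few (i : ℕ) (hi : i < m) :
      (#{j | (1 / 2) ^ (i + 1) ≤ freq (fun i => B (X i) (G j)) (y j) - 1 / Fintype.card A} : ℝ)
        ≤ 160 * Fintype.card J / Fintype.card ι * 4 ^ i :=
    calc (#{j | (1 / 2) ^ (i + 1) ≤ freq (fun i => B (X i) (G j)) (y j) - 1 / Fintype.card A} : ℝ)
        ≤ #(heavy (fun i => B (X i) ∘ G) ((1 / 2) ^ (i + 1))) := by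
          refine Nat.cast_le.2 (card_le_card fun j hj => mem_heavy.2 ⟨y j, ?_⟩)
          exact le_sub_iff_add_le'.1 (mem_filter.1 hj).2
      _ ≤ 40 / (Fintype.card ι * ((1 / 2) ^ (i + 1)) ^ 2) * Fintype.card J :=
          (hG i hi).card_heavy_le hB hX (by positivity)
            (pow_le_one₀ (by norm_num) (by norm_num))
      _ = 160 * Fintype.card J / Fintype.card ι * 4 ^ i := by
          rw [show (4 : ℝ) ^ i = (2 ^ i) ^ 2 by rw [← pow_mul', pow_mul]; norm_num, one_div_pow]
          field_simp
          ring
  have excess := sum_le_of_forall_card_le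
    (fun j => (sub_le_self _ (by positivity)).trans (freq_le_one _ (y j))) (by positivity) few
  rw [sum_sub_distrib, sum_const, card_univ, nsmul_eq_mul, sub_le_iff_le_add] at excess
  refine excess.trans_eq ?_
  ring

noncomputable instance (B : M → V → A) (L : ℕ) (t : ℝ) :
    DecidablePred (IsRepresentativeAt B L t (J := J)) :=
  Classical.decPred _

theorem card_not_isRepresentativeAt_le [Nonempty A] [Fintype M] [DecidableEq J] (B : M → V → A)
    {L : ℕ} (hL : 0 < L)
    (hM : 33 * Real.log (16 * Fintype.card A * L) * Real.log (Fintype.card M) * L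
      ≤ 5 * Fintype.card J) {t : ℝ} (ht : 0 < t) (ht₁ : t ≤ 1) :
    (#{G : J → V | ¬ IsRepresentativeAt B L t G} : ℝ)
      ≤ Real.exp (-(5 * Fintype.card J / L)) * Fintype.card (J → V) := by
  have hL' : (0 : ℝ) < L := Nat.cast_pos.2 hL
  have few_samples : sampleSize (Fintype.card A) L t * Real.log (Fintype.card M)
      ≤ 5 / (L * t ^ 2) * Fintype.card J :=
    calc sampleSize (Fintype.card A) L t * Real.log (Fintype.card M)
        ≤ 33 * Real.log (16 * Fintype.card A * L) / t ^ 2 * Real.log (Fintype.card M) := by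
          gcongr
          exact sampleSize_le Fintype.card_pos hL ht ht₁
      _ = 33 * Real.log (16 * Fintype.card A * L) * Real.log (Fintype.card M) * L
            / (L * t ^ 2) := by field_simp
      _ ≤ 5 * Fintype.card J / (L * t ^ 2) := by gcongr
      _ = 5 / (L * t ^ 2) * Fintype.card J := by ring
  calc (#{G : J → V | ¬ IsRepresentativeAt B L t G} : ℝ)
      ≤ Real.exp (-(5 / (L * t ^ 2) * Fintype.card J)) * Fintype.card (J → V) := by
        convert card_not_isRepresentative_le B few_samples (3 * t / 4)
        rfl
    _ ≤ Real.exp (-(5 * Fintype.card J / L)) * Fintype.card (J → V) := by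
        rw [div_mul_eq_mul_div]
        gcongr
        exact mul_le_of_le_one_right hL'.le (pow_le_one₀ ht.le ht₁)

noncomputable instance (B : M → V → A) (L m : ℕ) :
    DecidablePred (IsMultiscaleRepresentative B L m (J := J)) :=
  Classical.decPred _

theorem card_not_isMultiscaleRepresentative_le [Nonempty A] [Fintype M] [DecidableEq J]
    (B : M → V → A) {L : ℕ} (hL : 0 < L)
    (hM : 33 * Real.log (16 * Fintype.card A * L) * Real.log (Fintype.card M) * L
      ≤ 5 * Fintype.card J) (m : ℕ) :
    (#{G : J → V | ¬ IsMultiscaleRepresentative B L m G} : ℝ)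
      ≤ m * Real.exp (-(5 * Fintype.card J / L)) * Fintype.card (J → V) := by
  classical
  have union : ({G : J → V | ¬ IsMultiscaleRepresentative B L m G} : Finset _)
      ⊆ (range m).biUnion fun i => {G | ¬ IsRepresentativeAt B L ((1 / 2) ^ (i + 1)) G} := by
    intro G hG
    simpa [IsMultiscaleRepresentative] using hG
  calc (#{G : J → V | ¬ IsMultiscaleRepresentative B L m G} : ℝ)
      ≤ ∑ i ∈ range m, (#{G : J → V | ¬ IsRepresentativeAt B L ((1 / 2) ^ (i + 1)) G} : ℝ) := by
        exact_mod_cast (card_le_card union).trans card_biUnion_le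
    _ ≤ ∑ _i ∈ range m, Real.exp (-(5 * Fintype.card J / L)) * Fintype.card (J → V) :=
        sum_le_sum fun i _ => card_not_isRepresentativeAt_le B hL hM (by positivity)
          (pow_le_one₀ (by norm_num) (by norm_num))
    _ = m * Real.exp (-(5 * Fintype.card J / L)) * Fintype.card (J → V) := by
        rw [sum_const, card_range, nsmul_eq_mul, mul_assoc]

theorem le_card_isMultiscaleRepresentative [Nonempty A] [Fintype M] [DecidableEq J]
    (B : M → V → A) {L : ℕ} (hL : 0 < L)
    (hM : 33 * Real.log (16 * Fintype.card A * L) * Real.log (Fintype.card M) * L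
      ≤ 5 * Fintype.card J) (m : ℕ) :
    (1 - m * Real.exp (-(5 * Fintype.card J / L))) * Fintype.card (J → V)
      ≤ #{G : J → V | IsMultiscaleRepresentative B L m G} := by
  have bad := card_not_isMultiscaleRepresentative_le B hL hM m
  have total := card_filter_add_card_filter_not (s := univ)
    (IsMultiscaleRepresentative B L m (J := J))
  rw [card_univ] at total
  rw [← total, Nat.cast_add] at bad ⊢
  linarith

end Puncturing

section ListDecoding

open Finset

variable {n : ℕ} {ι M A : Type*}

theorem mul_one_sub_relDist [DecidableEq A] (hn : 0 < n) (x y : Fin n → A) :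
    n * (1 - relDist x y) = #{j | x j = y j} := by
  have hn : (n : ℝ) ≠ 0 := Nat.cast_ne_zero.2 hn.ne'
  have split := card_filter_add_card_filter_not (s := univ) fun j => x j = y j
  rw [card_univ, Fintype.card_fin] at split
  rw [relDist, mul_sub, mul_one, mul_div_cancel₀ _ hn, Set.ncard_eq_toFinset_card',
    Set.toFinset_ofPred, sub_eq_iff_eq_add]
  exact_mod_cast split.symm

theorem mul_sum_one_sub_relDist [Fintype ι] [DecidableEq A] (hn : 0 < n) (w : ι → Fin n → A)
    (y : Fin n → A) :
    n * ∑ i, (1 - relDist (w i) y) = Fintype.card ι * ∑ j, freq (w · j) (y j) := by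
  simp only [mul_sum, mul_one_sub_relDist hn, card_mul_freq, card_filter, Nat.cast_sum]
  exact sum_comm

theorem exists_le_relDist [Fintype ι] [Nonempty ι] [DecidableEq A] (hn : 0 < n)
    {w : ι → Fin n → A} {y : Fin n → A} {ρ : ℝ}
    (h : ∑ j, freq (w · j) (y j) ≤ n * (1 - ρ)) : ∃ i, ρ ≤ relDist (w i) y := by
  suffices ∃ i ∈ univ, 1 - relDist (w i) y ≤ 1 - ρ by
    simpa only [mem_univ, true_and, sub_le_sub_iff_left] using this
  refine exists_le_of_sum_le univ_nonempty
    (le_of_mul_le_mul_left ?_ (Nat.cast_pos.2 hn : (0 : ℝ) < n))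
  calc n * ∑ i, (1 - relDist (w i) y) = Fintype.card ι * ∑ j, freq (w · j) (y j) :=
        mul_sum_one_sub_relDist hn w y
    _ ≤ Fintype.card ι * (n * (1 - ρ)) := by gcongr
    _ = n * ∑ _i : ι, (1 - ρ) := by
        rw [sum_const, card_univ, nsmul_eq_mul]
        ring

theorem listDecodable_range_of_forall_injective [Finite M] {f : M → Fin n → A} {ρ : ℝ} {L : ℕ}
    (h : ∀ X : Fin L → M, X.Injective → ∀ y, ∃ i, ρ ≤ relDist (f (X i)) y) :
    listDecodable (Set.range f) ρ L := fun y => by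
  have image : {c | c ∈ Set.range f ∧ relDist c y < ρ} = f '' {x | relDist (f x) y < ρ} := by
    ext c
    simp only [Set.mem_image, Set.mem_range, Set.mem_ofPred_eq]
    exact ⟨fun ⟨⟨x, hx⟩, hc⟩ => ⟨x, hx ▸ hc, hx⟩, fun ⟨x, hc, hx⟩ => ⟨⟨x, hx⟩, hx ▸ hc⟩⟩
  rw [image, Nat.cast_le]
  refine (Set.ncard_image_le (Set.toFinite _)).trans ?_
  by_contra! hL
  have := Fintype.ofFinite {x | relDist (f x) y < ρ}
  obtain ⟨X⟩ := Function.Embedding.nonempty_of_card_le (α := Fin L)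
    (β := {x | relDist (f x) y < ρ})
    (by rw [Fintype.card_fin, ← Nat.card_eq_fintype_card]; exact hL.le)
  obtain ⟨i, hi⟩ := h (fun i => X i) (Subtype.val_injective.comp X.injective) y
  exact hi.not_gt (X i).2

theorem listDecodable.mono {C : Set (Fin n → A)} {ρ L L' : ℝ} (hC : listDecodable C ρ L)
    (hL : L ≤ L') : listDecodable C ρ L' :=
  fun y => (hC y).trans hL

end ListDecoding

section RandomPuncturing

open Finset

theorem exists_dyadic_scale {ε : ℝ} (hε : 0 < ε) (hε₁ : ε ≤ 1) :
    ∃ m : ℕ, m ≤ 4 / ε ∧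
      ∀ L : ℝ, 5120 / ε ^ 2 ≤ L → (1 / 2) ^ m + 160 * 2 ^ m / L ≤ ε / 2 := by
  obtain ⟨k, hk, hk'⟩ := exists_nat_pow_near (x := 4 / ε) (y := 2)
    (by rw [le_div_iff₀ hε]; linarith) one_lt_two
  refine ⟨k + 1, le_trans ?_ hk, fun L hL => ?_⟩
  · exact_mod_cast Nat.lt_two_pow_self
  have half_pow : (1 / 2) ^ (k + 1) ≤ ε / 4 := by
    rw [one_div_pow, one_div_le (by positivity) (by positivity), one_div_div]
    exact hk'.le
  have two_pow : 160 * 2 ^ (k + 1) / L ≤ ε / 4 := by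
    calc 160 * 2 ^ (k + 1) / L ≤ 160 * (4 / ε * 2) / (5120 / ε ^ 2) := by
          rw [pow_succ]
          gcongr
      _ = ε / 4 := by
          field_simp
          norm_num
  linarith

theorem log_sixteen_mul_le {q ε L : ℝ} (hq : 2 ≤ q) (hε : 0 < ε) (hε₁ : ε ≤ 1) (hL : 0 < L)
    (hL' : L ≤ 5121 / ε ^ 2) : Real.log (16 * q * L) ≤ 19 * Real.log (q / ε) := by
  have two_le : 2 ≤ q / ε := by rw [le_div_iff₀ hε]; linarith
  rw [show (19 : ℝ) = (19 : ℕ) by norm_num, ← Real.log_pow]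
  refine Real.log_le_log (by positivity) ?_
  calc 16 * q * L ≤ 16 * q * (5121 / ε ^ 2) := by gcongr
    _ = 81936 * (q * 1 / ε ^ 2) := by ring
    _ ≤ 2 ^ 17 * (q * q / ε ^ 2) := by
        gcongr <;> linarith
    _ = 2 ^ 17 * (q / ε) ^ 2 := by ring
    _ ≤ (q / ε) ^ 17 * (q / ε) ^ 2 := by gcongr
    _ = (q / ε) ^ 19 := by rw [← pow_add]

theorem log_sixteen_mul_mul_le {q ε L K N : ℝ} (hq : 2 ≤ q) (hε : 0 < ε) (hε₁ : ε ≤ 1) (hL : 0 < L)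
    (hL' : L ≤ 5121 / ε ^ 2) (hK : 0 ≤ K) (hKN : 10 ^ 6 * K * Real.log (q / ε) ≤ ε ^ 2 * N) :
    33 * Real.log (16 * q * L) * K * L ≤ 5 * N := by
  have log_nonneg : 0 ≤ Real.log (q / ε) :=
    Real.log_nonneg (by rw [le_div_iff₀ hε]; linarith)
  calc 33 * Real.log (16 * q * L) * K * L
      ≤ 33 * (19 * Real.log (q / ε)) * K * (5121 / ε ^ 2) := by
        gcongr
        exact log_sixteen_mul_le hq hε hε₁ hL hL'
    _ = 33 * 19 * 5121 * (K * Real.log (q / ε) / ε ^ 2) := by ring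
    _ ≤ 5 * 10 ^ 6 * (K * Real.log (q / ε) / ε ^ 2) :=
        mul_le_mul_of_nonneg_right (by norm_num) (by positivity)
    _ = 5 * (10 ^ 6 * K * Real.log (q / ε) / ε ^ 2) := by ring
    _ ≤ 5 * N := by
        gcongr
        rwa [div_le_iff₀' (by positivity)]

variable {M V A : Type*} [Fintype V] [Fintype A] [DecidableEq A] [Nontrivial A] {B : M → V → A}
  {n : ℕ} {ε : ℝ}

theorem IsMultiscaleRepresentative.listDecodable [Finite M] (hB : HasHadamardDistance B)
    (hn : 0 < n) (hε : 0 ≤ ε) {L m : ℕ} (hL : 0 < L) (hm : (1 / 2) ^ m + 160 * 2 ^ m / L ≤ ε / 2)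
    {G : Fin n → V} (hG : IsMultiscaleRepresentative B L m G) :
    listDecodable (Set.range fun x => B x ∘ G) ((1 - 1 / Fintype.card A) * (1 - ε)) L := by
  have : Nonempty (Fin L) := ⟨⟨0, hL⟩⟩
  refine listDecodable_range_of_forall_injective fun X hX y => exists_le_relDist hn ?_
  rw [← Fintype.card_fin L] at hG
  have half_le : 1 / 2 ≤ 1 - 1 / (Fintype.card A : ℝ) := by
    have : (2 : ℝ) ≤ Fintype.card A := by exact_mod_cast Fintype.one_lt_card
    linarith [one_div_le_one_div_of_le two_pos this]
  calc ∑ j, freq (fun i => B (X i) (G j)) (y j)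
      ≤ n * (1 / Fintype.card A + ((1 / 2) ^ m + 160 * 2 ^ m / L)) := by
        simpa only [Fintype.card_fin] using hG.sum_freq_le hB hX y
    _ ≤ n * (1 - (1 - 1 / Fintype.card A) * (1 - ε)) := by
        gcongr
        linarith [mul_le_mul_of_nonneg_right half_le hε]

theorem le_ncard_listDecodable_comp [Fintype M] (hB : HasHadamardDistance B) (hn : 0 < n)
    (hε : 0 < ε) (hε₁ : ε ≤ 1)
    (hM : 10 ^ 6 * Real.log (Fintype.card M) * Real.log (Fintype.card A / ε) ≤ ε ^ 2 * n) :
    (1 - 4 / ε * Real.exp (-(ε ^ 2 * n / 1025))) * Fintype.card (Fin n → V)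
      ≤ {G : Fin n → V | listDecodable (Set.range fun x => B x ∘ G)
          ((1 - 1 / Fintype.card A) * (1 - ε)) (5121 / ε ^ 2)}.ncard := by
  obtain ⟨m, hm, hm'⟩ := exists_dyadic_scale hε hε₁
  obtain ⟨L, hL, hL'⟩ : ∃ L : ℕ, 5120 / ε ^ 2 ≤ L ∧ (L : ℝ) ≤ 5121 / ε ^ 2 := by
    refine ⟨⌈5120 / ε ^ 2⌉₊, Nat.le_ceil _, (Nat.ceil_lt_add_one (by positivity)).le.trans ?_⟩
    have : 1 ≤ 1 / ε ^ 2 := one_le_one_div (by positivity) (pow_le_one₀ hε.le hε₁)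
    linarith [add_div 5120 1 (ε ^ 2)]
  have hL₀ : (0 : ℝ) < L := lt_of_lt_of_le (by positivity) hL
  have hq : (2 : ℝ) ≤ Fintype.card A := by exact_mod_cast Fintype.one_lt_card
  have failure_le : m * Real.exp (-(5 * Fintype.card (Fin n) / L))
      ≤ 4 / ε * Real.exp (-(ε ^ 2 * n / 1025)) := by
    refine mul_le_mul hm (Real.exp_le_exp.2 (neg_le_neg ?_)) (Real.exp_nonneg _) (by positivity)
    rw [Fintype.card_fin, le_div_iff₀ hL₀]
    calc ε ^ 2 * n / 1025 * L ≤ ε ^ 2 * n / 1025 * (5121 / ε ^ 2) := by gcongr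
      _ = 5121 / 1025 * (n : ℝ) := by field_simp
      _ ≤ 5 * n := mul_le_mul_of_nonneg_right (by norm_num) (Nat.cast_nonneg n)
  calc (1 - 4 / ε * Real.exp (-(ε ^ 2 * n / 1025))) * Fintype.card (Fin n → V)
      ≤ (1 - m * Real.exp (-(5 * Fintype.card (Fin n) / L))) * Fintype.card (Fin n → V) := by
        gcongr
    _ ≤ #{G : Fin n → V | IsMultiscaleRepresentative B L m G} := by
        refine le_card_isMultiscaleRepresentative B (Nat.cast_pos.1 hL₀) ?_ m
        rw [Fintype.card_fin]
        exact log_sixteen_mul_mul_le hq hε hε₁ hL₀ hL' (Real.log_natCast_nonneg _) hM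
    _ ≤ {G : Fin n → V | listDecodable (Set.range fun x => B x ∘ G)
          ((1 - 1 / Fintype.card A) * (1 - ε)) (5121 / ε ^ 2)}.ncard := by
        rw [← Set.ncard_coe_finset, Nat.cast_le]
        refine Set.ncard_le_ncard (fun G hG => ?_) (Set.toFinite _)
        exact ((mem_filter.1 hG).2.listDecodable hB hn hε.le (Nat.cast_pos.1 hL₀)
          (hm' L hL)).mono hL'

end RandomPuncturing

section RandomLinearCode

open Finset

variable {F : Type*} [Field F] [Fintype F]

theorem card_mul_card_dotProduct_eq_zero [DecidableEq F] {m : Type*} [Fintype m] [DecidableEq m]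
    {z : m → F} (hz : z ≠ 0) :
    Fintype.card F * #{g : m → F | z ⬝ᵥ g = 0} = Fintype.card (m → F) := by
  let φ : (m → F) →ₗ[F] F := dotProductBilin F F z
  have hφ : φ ≠ 0 := fun h => hz (dotProduct_eq_zero z fun g => LinearMap.congr_fun h g)
  have index : φ.toAddMonoidHom.ker.index = Fintype.card F := by
    rw [AddSubgroup.index_ker, AddMonoidHom.range_eq_top.2 (LinearMap.surjective hφ),
      AddSubgroup.card_top, Nat.card_eq_fintype_card]
  have ker : Nat.card φ.toAddMonoidHom.ker = #{g : m → F | z ⬝ᵥ g = 0} := by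
    rw [← Set.ncard_coe_finset, ← Nat.card_coe_set_eq]
    congr! 2
    ext g
    simp [φ, AddMonoidHom.mem_ker]
  rw [← index, ← ker, mul_comm, AddSubgroup.card_mul_index, Nat.card_eq_fintype_card]

theorem hasHadamardDistance_dotProduct [DecidableEq F] {m : Type*} [Fintype m] [DecidableEq m] :
    HasHadamardDistance fun x g : m → F => x ⬝ᵥ g := fun x y hxy => by
  simp only [← sub_eq_zero (a := x ⬝ᵥ _), ← sub_dotProduct]
  exact (card_mul_card_dotProduct_eq_zero (sub_ne_zero.2 hxy)).le

theorem le_ncard_listDecodable_vecMul {k n : ℕ} (hn : 0 < n) {ε : ℝ} (hε : 0 < ε) (hε₁ : ε ≤ 1)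
    (hk : 10 ^ 6 * (k * Real.log (Fintype.card F)) * Real.log (Fintype.card F / ε) ≤ ε ^ 2 * n) :
    (1 - 4 / ε * Real.exp (-(ε ^ 2 * n / 1025))) * Fintype.card (Matrix (Fin k) (Fin n) F)
      ≤ {G : Matrix (Fin k) (Fin n) F |
          listDecodable (Set.range fun x : Fin k → F => Matrix.vecMul x G)
            ((1 - 1 / Fintype.card F) * (1 - ε)) (5121 / ε ^ 2)}.ncard := by
  classical
  calc (1 - 4 / ε * Real.exp (-(ε ^ 2 * n / 1025))) * Fintype.card (Matrix (Fin k) (Fin n) F)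
      = (1 - 4 / ε * Real.exp (-(ε ^ 2 * n / 1025))) * Fintype.card (Fin n → Fin k → F) := by
        congr 2
        exact Fintype.card_congr (Equiv.piComm fun (_ : Fin k) (_ : Fin n) => F)
    _ ≤ {G : Fin n → Fin k → F | listDecodable (Set.range fun x => (x ⬝ᵥ ·) ∘ G)
          ((1 - 1 / Fintype.card F) * (1 - ε)) (5121 / ε ^ 2)}.ncard :=
        le_ncard_listDecodable_comp hasHadamardDistance_dotProduct hn hε hε₁
          (by simpa [Real.log_pow] using hk)
    _ ≤ _ := Nat.cast_le.2 <| Set.ncard_le_ncard_of_injOn Matrix.transpose (fun _ hG => hG)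
        Matrix.transpose_injective.injOn

theorem eventually_mul_exp_neg_le {a b γ : ℝ} (hb : 0 < b) (hγ : 0 < γ) :
    ∀ᶠ n : ℕ in Filter.atTop, a * Real.exp (-(b * n)) ≤ γ := by
  have lim : Filter.Tendsto (fun n : ℕ => a * Real.exp (-(b * n))) Filter.atTop (nhds (a * 0)) :=
    (Real.tendsto_exp_neg_atTop_nhds_zero.comp
      (tendsto_natCast_atTop_atTop.const_mul_atTop hb)).const_mul a
  exact lim.eventually (eventually_le_nhds (by simpa using hγ))

theorem one_le_log_one_div_mul_sq_log_div {q ε γ : ℝ} (hq : 2 ≤ q) (hε : 0 < ε) (hε₁ : ε < 1 / 2)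
    (hγ : 0 < γ) (hγ₁ : γ < 1 / 2) : 1 ≤ Real.log (1 / γ) * Real.log (q / ε) ^ 2 := by
  have le_log_two : 0.69 ≤ Real.log 2 := by linarith [Real.log_two_gt_d9]
  have log_two_le : Real.log 2 ≤ Real.log (1 / γ) :=
    Real.log_le_log two_pos (by rw [le_div_iff₀ hγ]; linarith)
  have two_mul_log_two_le : 2 * Real.log 2 ≤ Real.log (q / ε) := by
    rw [show 2 * Real.log 2 = Real.log (2 ^ 2) by rw [Real.log_pow]; norm_cast]
    exact Real.log_le_log (by positivity) (by rw [le_div_iff₀ hε]; linarith)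
  calc (1 : ℝ) ≤ 0.69 * (2 * 0.69) ^ 2 := by norm_num
    _ ≤ Real.log 2 * (2 * Real.log 2) ^ 2 := by gcongr
    _ ≤ Real.log (1 / γ) * Real.log (q / ε) ^ 2 := by
        gcongr
        linarith

theorem div_log_cube_le_div_log {q ε γ a : ℝ} (hq : 2 ≤ q) (hε : 0 < ε) (hε₁ : ε < 1 / 2)
    (hγ : 0 < γ) (hγ₁ : γ < 1 / 2) (ha : 0 ≤ a) :
    a / (Real.log (1 / γ) * Real.log (q / ε) ^ 3 * Real.log q)
      ≤ a / (Real.log (q / ε) * Real.log q) := by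
  have log_q_pos : 0 < Real.log q := Real.log_pos (by linarith)
  have log_qε_pos : 0 < Real.log (q / ε) := Real.log_pos (by rw [lt_div_iff₀ hε]; linarith)
  gcongr
  calc Real.log (q / ε) ≤ Real.log (1 / γ) * Real.log (q / ε) ^ 2 * Real.log (q / ε) :=
        le_mul_of_one_le_left log_qε_pos.le
          (one_le_log_one_div_mul_sq_log_div hq hε hε₁ hγ hγ₁)
    _ = Real.log (1 / γ) * Real.log (q / ε) ^ 3 := by ring

end RandomLinearCode

theorem stmt1_general :
    ∃ c C : ℝ, 0 < c ∧ 0 < C ∧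
      ∀ (F : Type*) [Field F] [Fintype F],
        ∀ ε γ : ℝ, 0 < ε → ε ≤ 1 → 0 < γ →
          ∃ n₀ : ℕ, ∀ n : ℕ, n₀ ≤ n →
            ∃ kt : ℕ,
              (kt : ℝ) / (n : ℝ) ≥
                c * ε ^ 2 /
                  (Real.log ((Fintype.card F : ℝ) / ε) * Real.log (Fintype.card F : ℝ)) ∧
              ({G : Matrix (Fin kt) (Fin n) F |
                  listDecodable (Set.range fun x : Fin kt → F => Matrix.vecMul x G)
                    ((1 - 1 / (Fintype.card F : ℝ)) * (1 - ε)) (C / ε ^ 2)}.ncard : ℝ) ≥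
                (1 - γ) * (Fintype.card (Matrix (Fin kt) (Fin n) F) : ℝ) := by
  refine ⟨1 / (2 * 10 ^ 6), 5121, by norm_num, by norm_num, fun F _ _ ε γ hε hε₁ hγ => ?_⟩
  have hq : (2 : ℝ) ≤ Fintype.card F := by exact_mod_cast Fintype.one_lt_card
  have log_q_pos : 0 < Real.log (Fintype.card F) := Real.log_pos (by linarith)
  have log_qε_pos : 0 < Real.log (Fintype.card F / ε) :=
    Real.log_pos (by rw [lt_div_iff₀ hε]; linarith)
  set R := 1 / (2 * 10 ^ 6) * ε ^ 2 /
    (Real.log (Fintype.card F / ε) * Real.log (Fintype.card F)) with hR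
  have hR₀ : 0 < R := by positivity
  obtain ⟨n₀, hn₀⟩ := Filter.eventually_atTop.1
    (eventually_mul_exp_neg_le (a := 4 / ε) (b := ε ^ 2 / 1025) (by positivity) hγ)
  refine ⟨max n₀ ⌈1 / R⌉₊, fun n hn => ?_⟩
  have hRn : 1 ≤ R * n := by
    rw [← div_le_iff₀' hR₀]
    exact Nat.ceil_le.1 ((le_max_right _ _).trans hn)
  have n_pos : (0 : ℝ) < n := pos_of_mul_pos_right (one_pos.trans_le hRn) hR₀.le
  have ceil_le : (⌈R * n⌉₊ : ℝ) ≤ 2 * (R * n) := by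
    linarith [Nat.ceil_lt_add_one (zero_le_one.trans hRn)]
  refine ⟨⌈R * n⌉₊, (le_div_iff₀ n_pos).2 (Nat.le_ceil _), le_trans ?_ <|
    le_ncard_listDecodable_vecMul (Nat.cast_pos.1 n_pos) hε hε₁ ?_⟩
  · gcongr
    simpa only [div_mul_eq_mul_div] using hn₀ n ((le_max_left _ _).trans hn)
  · calc 10 ^ 6 * (⌈R * n⌉₊ * Real.log (Fintype.card F)) * Real.log (Fintype.card F / ε)
        ≤ 10 ^ 6 * (2 * (R * n) * Real.log (Fintype.card F)) * Real.log (Fintype.card F / ε) := by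
          gcongr
      _ = ε ^ 2 * n := by
          rw [hR]
          field_simp

/-- For a prime power q (a finite field F of order q) and ε, γ ∈ (0,1/2),
there are absolute constants c, C > 0 such that for all large enough n there is a dimension
k̃ with k̃/n ≥ c ε² / (log(1/γ) log³(q/ε) log q) for which the random linear code of
dimension k̃ and block length n over F is ((1 − 1/q)(1 − ε), C/ε²)-list decodable with
probability at least 1 − γ. -/
theorem stmt1 :
    ∃ c C : ℝ, 0 < c ∧ 0 < C ∧
      ∀ (F : Type) [Field F] [Fintype F],
        ∀ ε γ : ℝ, 0 < ε → ε < 1 / 2 → 0 < γ → γ < 1 / 2 →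
          ∃ n₀ : ℕ, ∀ n : ℕ, n₀ ≤ n →
            ∃ kt : ℕ,
              (kt : ℝ) / (n : ℝ) ≥
                c * ε ^ 2 /
                  (Real.log (1 / γ) * (Real.log ((Fintype.card F : ℝ) / ε)) ^ 3 *
                    Real.log (Fintype.card F : ℝ)) ∧
              ({G : Matrix (Fin kt) (Fin n) F |
                  listDecodable (Set.range fun x : Fin kt → F => Matrix.vecMul x G)
                    ((1 - 1 / (Fintype.card F : ℝ)) * (1 - ε)) (C / ε ^ 2)}.ncard : ℝ) ≥
                (1 - γ) * (Fintype.card (Matrix (Fin kt) (Fin n) F) : ℝ) := by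
  obtain ⟨c, C, hc, hC, h⟩ := stmt1_general
  exact ⟨c, C, hc, hC, fun F _ _ ε γ hε hε₁ hγ hγ₁ =>
    (h F ε γ hε (by linarith) hγ).imp fun n₀ hn₀ n hn => (hn₀ n hn).imp fun kt hkt =>
      ⟨(div_log_cube_le_div_log (mod_cast Fintype.one_lt_card) hε hε₁ hγ hγ₁ (by positivity)).trans
        hkt.1, hkt.2⟩⟩
end

section
/- Let q ≥ 2 and L ≥ 2 be integers, let C ⊆ [q]^n be a code, and let δ ∈ [0,1] satisfy δ(1 − 1/L) ≤ 1 − 1/q. If every subset of L distinct codewords of C has average pairwise relative Hamming distance at least δ, then C is (J_q(δ − δ/L), L−1)-list decodable. -/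
/-!
Fix a centre `y` and `L` codewords. In a single coordinate, if `e` of the `L` symbols differ from
the symbol of `y`, then Cauchy-Schwarz over the `q - 1` other symbols shows that at most
`2Le - q/(q-1) e²` of the ordered pairs of symbols disagree. This bound is concave in `e`, so it
survives averaging over the coordinates: with `r` the mean distance of the codewords to `y` and `d`
their average pairwise distance, `d - d/L ≤ 2r - q/(q-1) r²`. Completing the square, this says
`r ≥ J_q(d - d/L)`, so that the codewords cannot all lie strictly inside the Johnson radius of `y`.
-/

open scoped BigOperators

/-- Average pairwise relative Hamming distance of an L-tuple of codewords. -/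
noncomputable def avgPairDist {n L : ℕ} {A : Type*} (c : Fin L → (Fin n → A)) : ℝ :=
  (∑ i : Fin L, ∑ j : Fin L, if i < j then relDist (c i) (c j) else 0) / (L.choose 2 : ℝ)

/-- The Johnson radius function J_q(x) = ((q−1)/q)(1 − √(1 − qx/(q−1))). -/
noncomputable def Jq (q : ℕ) (x : ℝ) : ℝ :=
  ((q : ℝ) - 1) / q * (1 - Real.sqrt (1 - q * x / ((q : ℝ) - 1)))

section Counting

open Finset

variable {ι κ α : Type*} [Fintype ι] [Fintype κ] [DecidableEq α]

lemma sum_hammingDist_eq_sum_card_ne (c : ι → κ → α) (y : κ → α) :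
    ∑ i, hammingDist (c i) y = ∑ k, #{i | c i k ≠ y k} :=
  sum_card_bipartiteAbove_eq_sum_card_bipartiteBelow fun i k ↦ c i k ≠ y k

variable [Fintype α]

lemma sum_card_ne_add_sum_sq_card_fiber (f : ι → α) :
    ∑ i, #{j | f j ≠ f i} + ∑ b, #{i | f i = b} ^ 2 = Fintype.card ι ^ 2 := by
  have sum_sq : ∑ b, #{i | f i = b} ^ 2 = ∑ i, #{j | f j = f i} := by
    calc ∑ b, #{i | f i = b} ^ 2 = ∑ b, ∑ i with f i = b, #{j | f j = b} := by
          simp only [sum_const, smul_eq_mul, sq]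
      _ = ∑ i, #{j | f j = f i} := sum_fiberwise' univ f fun b ↦ #{j | f j = b}
  have card_split (i : ι) : #{j | f j ≠ f i} + #{j | f j = f i} = Fintype.card ι := by
    rw [add_comm, card_filter_add_card_filter_not, card_univ]
  rw [sum_sq, ← sum_add_distrib]
  simp only [card_split, sum_const, card_univ, smul_eq_mul, sq]

lemma sq_card_ne_le_card_sub_one_mul_sum_sq_card_fiber (f : ι → α) (a : α) :
    (#{i | f i ≠ a} : ℝ) ^ 2 ≤
      (Fintype.card α - 1) * ∑ b ∈ univ.erase a, (#{i | f i = b} : ℝ) ^ 2 := by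
  have card_ne : #{i | f i ≠ a} = ∑ b ∈ univ.erase a, #{i | f i = b} := by
    rw [card_eq_sum_card_fiberwise (t := univ.erase a) (f := f) (by intro i; simp)]
    refine sum_congr rfl fun b hb ↦ congrArg card ?_
    grind
  have card_erase : (#(univ.erase a) : ℝ) = Fintype.card α - 1 := by
    rw [cast_card_erase_of_mem (mem_univ a), card_univ]
  rw [card_ne, ← card_erase, Nat.cast_sum]
  exact sq_sum_le_card_mul_sum_sq

lemma sum_card_ne_le_two_mul_sub [Nontrivial α] (f : ι → α) (a : α) :
    (∑ i, #{j | f j ≠ f i} : ℝ) ≤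
      2 * Fintype.card ι * #{i | f i ≠ a} -
        Fintype.card α / (Fintype.card α - 1) * (#{i | f i ≠ a} : ℝ) ^ 2 := by
  have hα : (0 : ℝ) < Fintype.card α - 1 := by
    rw [sub_pos]
    exact_mod_cast Fintype.one_lt_card
  set e : ℝ := (#{i | f i ≠ a} : ℝ) with he
  set s : ℝ := ∑ b ∈ univ.erase a, (#{i | f i = b} : ℝ) ^ 2
  have card_eq : (#{i | f i = a} : ℝ) = Fintype.card ι - e := by
    rw [eq_sub_iff_add_eq, he, ← card_univ]
    exact_mod_cast card_filter_add_card_filter_not (s := univ) (f · = a)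
  have pairs : (∑ i, #{j | f j ≠ f i} : ℝ) + ((Fintype.card ι - e) ^ 2 + s) =
      Fintype.card ι ^ 2 := by
    rw [← card_eq, add_sum_erase univ (fun b ↦ (#{i | f i = b} : ℝ) ^ 2) (mem_univ a)]
    exact_mod_cast sum_card_ne_add_sum_sq_card_fiber f
  have cauchy_schwarz : e ^ 2 / (Fintype.card α - 1) ≤ s :=
    (div_le_iff₀' hα).2 (sq_card_ne_le_card_sub_one_mul_sum_sq_card_fiber f a)
  have coeff : (Fintype.card α / (Fintype.card α - 1) : ℝ) * e ^ 2 =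
      e ^ 2 + e ^ 2 / (Fintype.card α - 1) := by
    field_simp
    ring
  linarith

lemma sum_sum_hammingDist_le [Nontrivial α] (c : ι → κ → α) (y : κ → α) :
    (∑ i, ∑ j, hammingDist (c i) (c j) : ℝ) ≤
      2 * Fintype.card ι * ∑ i, (hammingDist (c i) y : ℝ) -
        Fintype.card α / (Fintype.card α - 1) *
          ((∑ i, (hammingDist (c i) y : ℝ)) ^ 2 / Fintype.card κ) := by
  have hα : (0 : ℝ) < Fintype.card α - 1 := by
    rw [sub_pos]
    exact_mod_cast Fintype.one_lt_card
  set e : κ → ℝ := fun k ↦ #{i | c i k ≠ y k}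
  have sum_e : (∑ i, hammingDist (c i) y : ℝ) = ∑ k, e k := by
    simp only [e]
    exact_mod_cast sum_hammingDist_eq_sum_card_ne c y
  have sum_pairs : ∑ i, ∑ j, hammingDist (c i) (c j) = ∑ k, ∑ i, #{j | c j k ≠ c i k} := by
    rw [sum_comm]
    simp only [sum_hammingDist_eq_sum_card_ne]
    exact sum_comm
  have jensen : (∑ k, e k) ^ 2 / Fintype.card κ ≤ ∑ k, e k ^ 2 :=
    div_le_of_le_mul₀ (Nat.cast_nonneg _) (sum_nonneg fun k _ ↦ sq_nonneg (e k)) <|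
      sq_sum_le_card_mul_sum_sq.trans_eq (mul_comm _ _)
  calc (∑ i, ∑ j, hammingDist (c i) (c j) : ℝ) = ∑ k, ∑ i, (#{j | c j k ≠ c i k} : ℝ) := by
        exact_mod_cast sum_pairs
    _ ≤ ∑ k, (2 * Fintype.card ι * e k -
          Fintype.card α / (Fintype.card α - 1) * e k ^ 2) :=
        sum_le_sum fun k _ ↦ sum_card_ne_le_two_mul_sub (c · k) (y k)
    _ = 2 * Fintype.card ι * ∑ k, e k -
          Fintype.card α / (Fintype.card α - 1) * ∑ k, e k ^ 2 := by
        rw [sum_sub_distrib, ← mul_sum, ← mul_sum]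
    _ ≤ _ := by
        rw [sum_e]
        gcongr

end Counting

section RelDist

variable {n L : ℕ} {α : Type*}

lemma relDist_eq_hammingDist_div [DecidableEq α] (x y : Fin n → α) :
    relDist x y = hammingDist x y / n := by
  rw [relDist, Set.ncard_eq_toFinset_card', Set.toFinset_ofPred]
  rfl

lemma relDist_self (x : Fin n → α) : relDist x x = 0 := by
  simp [relDist]

lemma relDist_comm (x y : Fin n → α) : relDist x y = relDist y x := by
  simp only [relDist, ne_comm]

lemma sum_sum_relDist_eq_mul_avgPairDist (hL : 2 ≤ L) (c : Fin L → Fin n → α) :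
    ∑ i, ∑ j, relDist (c i) (c j) = L * (L - 1) * avgPairDist c := by
  have hL' : (2 : ℝ) ≤ L := by exact_mod_cast hL
  have hL₁ : (L : ℝ) - 1 ≠ 0 := by linarith
  set p : Fin L → Fin L → ℝ := fun i j ↦ if i < j then relDist (c i) (c j) else 0
  have relDist_eq (i j : Fin L) : relDist (c i) (c j) = p i j + p j i := by
    rcases lt_trichotomy i j with h | rfl | h
    · simp [p, h, h.not_gt]
    · simp [p, relDist_self]
    · simp [p, h, h.not_gt, relDist_comm (c i)]
  have sum_eq : ∑ i, ∑ j, relDist (c i) (c j) = 2 * ∑ i, ∑ j, p i j := by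
    simp only [relDist_eq, Finset.sum_add_distrib]
    rw [Finset.sum_comm (f := fun i j ↦ p j i), two_mul]
  rw [sum_eq, avgPairDist, Nat.cast_choose_two]
  simp only [p]
  field_simp

lemma sum_sum_relDist_le [Fintype α] [Nontrivial α] (c : Fin L → Fin n → α) (y : Fin n → α) :
    ∑ i, ∑ j, relDist (c i) (c j) ≤
      2 * L * ∑ i, relDist (c i) y -
        Fintype.card α / (Fintype.card α - 1) * (∑ i, relDist (c i) y) ^ 2 := by
  classical
  have hamming := div_le_div_of_nonneg_right (sum_sum_hammingDist_le c y) (Nat.cast_nonneg n)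
  simp only [Fintype.card_fin] at hamming
  simp only [relDist_eq_hammingDist_div, ← Finset.sum_div]
  calc _ ≤ _ := hamming
    _ = _ := by ring

lemma avgPairDist_sub_div_le [Fintype α] [Nontrivial α] (hL : 2 ≤ L) (c : Fin L → Fin n → α)
    (y : Fin n → α) :
    avgPairDist c - avgPairDist c / L ≤
      2 * ((∑ i, relDist (c i) y) / L) -
        Fintype.card α / (Fintype.card α - 1) * ((∑ i, relDist (c i) y) / L) ^ 2 := by
  calc avgPairDist c - avgPairDist c / L = (∑ i, ∑ j, relDist (c i) (c j)) / L ^ 2 := by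
        rw [sum_sum_relDist_eq_mul_avgPairDist hL]
        field_simp
    _ ≤ (2 * L * ∑ i, relDist (c i) y -
          Fintype.card α / (Fintype.card α - 1) * (∑ i, relDist (c i) y) ^ 2) / L ^ 2 := by
        gcongr
        exact sum_sum_relDist_le c y
    _ = _ := by field_simp

end RelDist

section ListDecodable

variable {n L : ℕ} {α : Type*}

lemma exists_injective_forall_mem_of_le_ncard {β : Type*} {s : Set β} {m : ℕ}
    (h : m ≤ s.ncard) : ∃ f : Fin m → β, Function.Injective f ∧ ∀ i, f i ∈ s := by
  rcases Nat.eq_zero_or_pos m with rfl | hm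
  · exact ⟨Fin.elim0, Function.injective_of_subsingleton _, fun i ↦ i.elim0⟩
  · let e : s ≃ Fin s.ncard := Nat.equivFinOfCardPos (hm.trans_le h).ne'
    exact ⟨fun i ↦ e.symm (i.castLE h),
      Subtype.val_injective.comp (e.symm.injective.comp (Fin.castLE_injective h)),
      fun i ↦ (e.symm (i.castLE h)).2⟩

lemma listDecodable_sub_one_of_forall_exists_le_relDist {C : Set (Fin n → α)} {ρ : ℝ}
    (h : ∀ c : Fin L → Fin n → α, Function.Injective c → (∀ i, c i ∈ C) →
      ∀ y, ∃ i, ρ ≤ relDist (c i) y) :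
    listDecodable C ρ (L - 1) := by
  intro y
  by_contra! hcard
  have card_ball : L ≤ {c | c ∈ C ∧ relDist c y < ρ}.ncard := by
    rw [sub_lt_iff_lt_add] at hcard
    exact Nat.lt_succ_iff.1 (by exact_mod_cast hcard)
  obtain ⟨c, c_injective, c_mem⟩ := exists_injective_forall_mem_of_le_ncard card_ball
  obtain ⟨i, hi⟩ := h c c_injective (fun i ↦ (c_mem i).1) y
  exact hi.not_gt (c_mem i).2

end ListDecodable

section Johnson

lemma Jq_le_of_le_two_mul_sub {q : ℕ} (hq : 2 ≤ q) {x r : ℝ}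
    (h : x ≤ 2 * r - q / (q - 1) * r ^ 2) : Jq q x ≤ r := by
  have hq' : (2 : ℝ) ≤ q := by exact_mod_cast hq
  have hq₁ : (0 : ℝ) < q - 1 := by linarith
  obtain ⟨t, ht⟩ : ∃ t : ℝ, t = q / (q - 1) := ⟨_, rfl⟩
  have ht₀ : 0 < t := by rw [ht]; positivity
  have Jq_eq : Jq q x = t⁻¹ * (1 - √(1 - t * x)) := by
    rw [Jq, ht, inv_div, div_mul_eq_mul_div (q : ℝ)]
  have complete_square : (1 - t * r) ^ 2 ≤ 1 - t * x := by
    calc (1 - t * r) ^ 2 = 1 - t * (2 * r - t * r ^ 2) := by ring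
      _ ≤ 1 - t * x := by rw [ht]; gcongr
  rw [Jq_eq, inv_mul_le_iff₀ ht₀]
  linarith [Real.le_sqrt_of_sq_le complete_square]

variable {n L : ℕ} {α : Type*}

lemma Jq_le_sum_relDist_div [Fintype α] [Nontrivial α] (hL : 2 ≤ L) {δ : ℝ}
    (c : Fin L → Fin n → α) (hδ : δ ≤ avgPairDist c) (y : Fin n → α) :
    Jq (Fintype.card α) (δ - δ / L) ≤ (∑ i, relDist (c i) y) / L := by
  have hL' : (1 : ℝ) ≤ L := by exact_mod_cast one_le_two.trans hL
  refine Jq_le_of_le_two_mul_sub Fintype.one_lt_card ?_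
  calc δ - δ / L = δ * (1 - 1 / L) := by ring
    _ ≤ avgPairDist c * (1 - 1 / L) := by
        gcongr
        exact sub_nonneg.2 (div_le_one_of_le₀ hL' (by positivity))
    _ = avgPairDist c - avgPairDist c / L := by ring
    _ ≤ _ := avgPairDist_sub_div_le hL c y

theorem stmt2_general [Fintype α] [Nontrivial α] (hL : 2 ≤ L) {C : Set (Fin n → α)} {δ : ℝ}
    (havg : ∀ c : Fin L → Fin n → α,
      Function.Injective c → (∀ i, c i ∈ C) → δ ≤ avgPairDist c) :
    listDecodable C (Jq (Fintype.card α) (δ - δ / L)) (L - 1) := by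
  refine listDecodable_sub_one_of_forall_exists_le_relDist fun c hc hcC y ↦ ?_
  have hL₀ : (0 : ℝ) < L := by positivity
  have : NeZero L := ⟨by lia⟩
  have johnson := Jq_le_sum_relDist_div hL c (havg c hc hcC) y
  rw [le_div_iff₀ hL₀] at johnson
  obtain ⟨i, -, hi⟩ := Finset.exists_le_of_sum_le Finset.univ_nonempty
    (f := fun _ : Fin L ↦ Jq (Fintype.card α) (δ - δ / L)) (g := fun i ↦ relDist (c i) y)
    (by simpa [mul_comm] using johnson)
  exact ⟨i, hi⟩

end Johnson

/-- Average-distance Johnson bound.  If every L distinct codewords of a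
q-ary code C have average pairwise relative distance at least δ, where
δ(1 − 1/L) ≤ 1 − 1/q, then C is (J_q(δ − δ/L), L − 1)-list decodable. -/
theorem stmt2 (q L n : ℕ) (hq : 2 ≤ q) (hL : 2 ≤ L)
    (C : Set (Fin n → Fin q)) (δ : ℝ) (hδ0 : 0 ≤ δ) (hδ1 : δ ≤ 1)
    (hdom : δ * (1 - 1 / (L : ℝ)) ≤ 1 - 1 / (q : ℝ))
    (havg : ∀ c : Fin L → (Fin n → Fin q),
      Function.Injective c → (∀ i, c i ∈ C) → δ ≤ avgPairDist c) :
    listDecodable C (Jq q (δ - δ / (L : ℝ))) ((L : ℝ) - 1) := by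
  have : Nontrivial (Fin q) := Fin.nontrivial_iff_two_le.2 hq
  simpa only [Fintype.card_fin] using stmt2_general hL havg
end

section
/- Let K > 0 and A be real numbers with 0 < A ≤ 2K. Then ∫₀^A √(ln(1 + 2K/u)) du ≤ A·√(ln(4K/A)) + A/(2·√(ln(4K/A))). -/
open MeasureTheory

/- The tangent line to `√` at `s² = log (4K/A)` gives
`√y ≤ s + (y - s²) / (2s)`, so it suffices to bound the mean of `log (1 + 2K/u)` over `(0, A]` by
`log (4K/A) + 1`, which is exactly the mean of `log (4K/u)`. The two logarithms differ by
`log ((u + 2K) / (4K)) ≤ (u - 2K) / (4K)`, whose integral over `(0, A]` is nonpositive as long as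
`A ≤ 4K`, although the integrand changes sign at `u = 2K`. -/

lemma sqrt_le_add_sub_sq_div_two_mul {s y : ℝ} (hs : 0 < s) (hy : 0 ≤ y) :
    √y ≤ s + (y - s ^ 2) / (2 * s) := by
  have htangent : s + (y - s ^ 2) / (2 * s) - √y = (√y - s) ^ 2 / (2 * s) := by
    field_simp
    linear_combination -Real.sq_sqrt hy
  have hgap : 0 ≤ (√y - s) ^ 2 / (2 * s) := by positivity
  linarith

lemma integral_sqrt_le_of_nonneg {α : Type*} [MeasurableSpace α] {μ : Measure α}
    [IsFiniteMeasure μ] {f : α → ℝ} {s : ℝ} (hs : 0 < s) (hf : 0 ≤ᵐ[μ] f)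
    (hfi : Integrable f μ) :
    ∫ x, √(f x) ∂μ ≤
      μ.real Set.univ * s + ((∫ x, f x ∂μ) - μ.real Set.univ * s ^ 2) / (2 * s) := by
  have hsub : Integrable (fun x ↦ f x - s ^ 2) μ := hfi.sub (integrable_const _)
  calc ∫ x, √(f x) ∂μ
      ≤ ∫ x, (s + (f x - s ^ 2) / (2 * s)) ∂μ := by
        refine integral_mono_of_nonneg (ae_of_all _ fun x ↦ Real.sqrt_nonneg _)
          ((integrable_const s).add (hsub.div_const _)) ?_
        filter_upwards [hf] with x hx using sqrt_le_add_sub_sq_div_two_mul hs hx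
    _ = μ.real Set.univ * s + ((∫ x, f x ∂μ) - μ.real Set.univ * s ^ 2) / (2 * s) := by
        rw [integral_add (integrable_const s) (hsub.div_const _), integral_div,
          integral_sub hfi (integrable_const _), integral_const, integral_const, smul_eq_mul,
          smul_eq_mul]

lemma intervalIntegrable_log_div (c a b : ℝ) :
    IntervalIntegrable (fun u ↦ Real.log (c / u)) volume a b :=
  MeromorphicOn.intervalIntegrable_log (f := fun u ↦ c / u) fun u _ ↦ by fun_prop

lemma intervalIntegrable_log_one_add_div (c a b : ℝ) :
    IntervalIntegrable (fun u ↦ Real.log (1 + c / u)) volume a b :=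
  MeromorphicOn.intervalIntegrable_log (f := fun u ↦ 1 + c / u) fun u _ ↦ by fun_prop

lemma integral_log_div {c : ℝ} (hc : c ≠ 0) (A : ℝ) :
    ∫ u in (0)..A, Real.log (c / u) = A * (Real.log (c / A) + 1) := by
  have hinv (u : ℝ) : Real.log (c / u) = -Real.log (u / c) := by rw [← Real.log_inv, inv_div]
  simp only [hinv, intervalIntegral.integral_neg]
  rw [intervalIntegral.integral_comp_div Real.log hc, integral_log, smul_eq_mul, zero_div,
    Real.log_zero]
  field_simp
  ring

lemma log_one_add_div_le {c u : ℝ} (hc : 0 < c) (hu : 0 < u) :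
    Real.log (1 + c / u) ≤ Real.log (2 * c / u) + (u - c) / (2 * c) := by
  have hfactor : 1 + c / u = 2 * c / u * ((u + c) / (2 * c)) := by field_simp
  calc Real.log (1 + c / u)
      = Real.log (2 * c / u) + Real.log ((u + c) / (2 * c)) := by
        rw [hfactor, Real.log_mul (by positivity) (by positivity)]
    _ ≤ Real.log (2 * c / u) + ((u + c) / (2 * c) - 1) := by
        gcongr
        exact Real.log_le_sub_one_of_pos (by positivity)
    _ = Real.log (2 * c / u) + (u - c) / (2 * c) := by
        field_simp
        ring

lemma integral_log_one_add_div_le {c A : ℝ} (hc : 0 < c) (hA : 0 ≤ A) (hAc : A ≤ 2 * c) :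
    ∫ u in (0)..A, Real.log (1 + c / u) ≤ A * (Real.log (2 * c / A) + 1) := by
  have hlin : IntervalIntegrable (fun u ↦ (u - c) / (2 * c)) volume 0 A :=
    Continuous.intervalIntegrable (by fun_prop) _ _
  have hlin_integral : ∫ u in (0)..A, (u - c) / (2 * c) = A * (A - 2 * c) / (4 * c) := by
    rw [intervalIntegral.integral_div, intervalIntegral.integral_sub (by simp) (by simp),
      integral_id, intervalIntegral.integral_const, smul_eq_mul]
    field_simp
    ring
  have hlin_nonpos : A * (A - 2 * c) / (4 * c) ≤ 0 :=
    div_nonpos_of_nonpos_of_nonneg (mul_nonpos_of_nonneg_of_nonpos hA (by linarith))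
      (by positivity)
  calc ∫ u in (0)..A, Real.log (1 + c / u)
      ≤ ∫ u in (0)..A, (Real.log (2 * c / u) + (u - c) / (2 * c)) :=
        intervalIntegral.integral_mono_on_of_le_Ioo hA (intervalIntegrable_log_one_add_div c 0 A)
          ((intervalIntegrable_log_div _ 0 A).add hlin) fun u hu ↦ log_one_add_div_le hc hu.1
    _ = A * (Real.log (2 * c / A) + 1) + A * (A - 2 * c) / (4 * c) := by
        rw [intervalIntegral.integral_add (intervalIntegrable_log_div _ 0 A) hlin,
          integral_log_div (by positivity), hlin_integral]
    _ ≤ A * (Real.log (2 * c / A) + 1) := by linarith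

theorem stmt17_general (K A : ℝ) (hA : 0 < A) (hAK : A < 4 * K) :
    (∫ u in Set.Ioc (0 : ℝ) A, Real.sqrt (Real.log (1 + 2 * K / u))) ≤
      A * Real.sqrt (Real.log (4 * K / A)) +
        A / (2 * Real.sqrt (Real.log (4 * K / A))) := by
  have hK : 0 < K := by linarith
  have hlog : 0 < Real.log (4 * K / A) := Real.log_pos ((one_lt_div hA).2 hAK)
  set s := √(Real.log (4 * K / A))
  have hs : 0 < s := Real.sqrt_pos.2 hlog
  have hs_sq : s ^ 2 = Real.log (4 * K / A) := Real.sq_sqrt hlog.le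
  have hmean : ∫ u in Set.Ioc 0 A, Real.log (1 + 2 * K / u) ≤ A * (s ^ 2 + 1) := by
    rw [hs_sq, ← intervalIntegral.integral_of_le hA.le, show 4 * K = 2 * (2 * K) by ring]
    exact integral_log_one_add_div_le (by positivity) hA.le (by linarith)
  have hnonneg : 0 ≤ᵐ[volume.restrict (Set.Ioc 0 A)] fun u ↦ Real.log (1 + 2 * K / u) := by
    filter_upwards [ae_restrict_mem measurableSet_Ioc] with u hu
    have : 0 ≤ 2 * K / u := div_nonneg (by positivity) hu.1.le
    exact Real.log_nonneg (by linarith)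
  calc ∫ u in Set.Ioc 0 A, √(Real.log (1 + 2 * K / u))
      ≤ A * s + ((∫ u in Set.Ioc 0 A, Real.log (1 + 2 * K / u)) - A * s ^ 2) / (2 * s) := by
        simpa [hA.le] using integral_sqrt_le_of_nonneg hs hnonneg
          (intervalIntegrable_log_one_add_div (2 * K) 0 A).1
    _ ≤ A * s + A / (2 * s) := by
        gcongr
        linarith

/-- For 0 < A ≤ 2K, the Lebesgue integral of u ↦ √(ln(1 + 2K/u)) over
(0, A] is at most A·√(ln(4K/A)) + A/(2·√(ln(4K/A))). -/
theorem stmt17 (K A : ℝ) (hK : 0 < K) (hA : 0 < A) (hA2 : A ≤ 2 * K) :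
    (∫ u in Set.Ioc (0 : ℝ) A, Real.sqrt (Real.log (1 + 2 * K / u))) ≤
      A * Real.sqrt (Real.log (4 * K / A)) +
        A / (2 * Real.sqrt (Real.log (4 * K / A))) :=
  stmt17_general K A hA (by linarith)
end
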